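/- arXiv:0812.1370 — 5 statements merged into one kernel-verified Lean document; each statement's English description precedes it below -/
import Mathlib

section
/- Let β ∈ ℂ with β ∉ ℤ. Then the module M = ℂ[x]_x·x^β is a simple B-module: its only B-submodules are 0 and M. -/
set_option synthInstance.maxHeartbeats 1000000
set_option maxHeartbeats 1000000

/-- A nonzero subspace of `ι →₀ K` stable under a diagonal operator with pairwise distinct
eigenvalues contains a basis vector. -/
theorem exists_single_mem_of_diagonal_stable {ι K : Type*} [Field K] (c : ι → K)
    (hc : Function.Injective c) (E : Module.End K (ι →₀ K))
    (hE : ∀ v i, E v i = c i * v i) (p : Submodule K (ι →₀ K))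
    (hp : ∀ v ∈ p, E v ∈ p) (v : ι →₀ K) (hv : v ∈ p) (hv0 : v ≠ 0) :
    ∃ i, Finsupp.single i (1 : K) ∈ p := by
  classical
  induction h : v.support.card using Nat.strong_induction_on generalizing v with
  | _ n ih =>
  obtain ⟨i, hi⟩ := Finsupp.support_nonempty_iff.mpr hv0
  have hw (j : ι) : (E v - c i • v) j = (c j - c i) * v j := by
    simp [hE, sub_mul]
  by_cases hw0 : E v - c i • v = 0
  · have hvi : v i ≠ 0 := Finsupp.mem_support_iff.mp hi
    refine ⟨i, ?_⟩
    have hsingle : Finsupp.single i (1 : K) = (v i)⁻¹ • v := by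
      ext j
      by_cases hij : i = j
      · subst hij
        simp [hvi]
      · have hj : v j = 0 := by
          have hj := hw j
          rw [hw0, Finsupp.zero_apply, eq_comm, mul_eq_zero, sub_eq_zero] at hj
          exact hj.resolve_left fun hji => hij (hc hji).symm
        simp [hij, hj]
    rw [hsingle]
    exact p.smul_mem _ hv
  · refine ih _ ?_ _ (p.sub_mem (hp v hv) (p.smul_mem _ hv)) hw0 rfl
    rw [← h]
    refine Finset.card_lt_card (Finset.ssubset_iff_subset_ne.mpr ⟨fun j hj => ?_, fun heq => ?_⟩)
    · rw [Finsupp.mem_support_iff, hw] at hj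
      exact Finsupp.mem_support_iff.mpr (right_ne_zero_of_mul hj)
    · rw [← heq, Finsupp.mem_support_iff, hw] at hi
      simp at hi

/-- if `β ∈ ℂ` is not an integer, the module `M = ℂ[x]_x · x^β`
(realized as `ℤ →₀ ℂ` with basis `e_i ↔ x^{β+i}`, with operators `X e_i = e_{i+1}` and
`D e_i = (β+i) e_{i-1}`) is a simple module over the subalgebra
`B = ℂ⟨X, D⟩ ⊆ End_ℂ(M)` (acting by application): the lattice of `B`-submodules of `M`
consists exactly of `0 = ⊥` and `M = ⊤`. -/
theorem stmt1 (β : ℂ) (hβ : ∀ n : ℤ, β ≠ n)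
    (X D : Module.End ℂ (ℤ →₀ ℂ))
    (hX : ∀ i : ℤ, X (Finsupp.single i 1) = Finsupp.single (i + 1) 1)
    (hD : ∀ i : ℤ, D (Finsupp.single i 1) = (β + (i : ℂ)) • Finsupp.single (i - 1) 1) :
    IsSimpleOrder (Submodule (Algebra.adjoin ℂ {X, D}) (ℤ →₀ ℂ)) := by
  have eq_top_of_ne_bot (N : Submodule (Algebra.adjoin ℂ {X, D}) (ℤ →₀ ℂ)) (hN : N ≠ ⊥) :
      N = ⊤ := by
    let p : Submodule ℂ (ℤ →₀ ℂ) := N.restrictScalars ℂ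
    have hpX : ∀ v ∈ p, X v ∈ p := fun v hv =>
      N.smul_mem ⟨X, Algebra.subset_adjoin (by simp)⟩ hv
    have hpD : ∀ v ∈ p, D v ∈ p := fun v hv =>
      N.smul_mem ⟨D, Algebra.subset_adjoin (by simp)⟩ hv
    have hXD (v : ℤ →₀ ℂ) (i : ℤ) : (X * D) v i = (β + i) * v i := by
      induction v using Finsupp.induction_linear with
      | zero => simp
      | add f g hf hg => rw [map_add, Finsupp.add_apply, hf, hg, Finsupp.add_apply, mul_add]
      | single j a =>
        rw [← Finsupp.smul_single_one, map_smul, Module.End.mul_apply,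
          hD, map_smul, hX, sub_add_cancel]
        by_cases hji : j = i
        · subst hji
          simp only [Finsupp.smul_apply, Finsupp.single_eq_same, smul_eq_mul]
          ring
        · simp [hji]
    obtain ⟨v, hv, hv0⟩ := N.ne_bot_iff.mp hN
    obtain ⟨i, hi⟩ := exists_single_mem_of_diagonal_stable (fun i : ℤ => β + (i : ℂ))
      (fun i j hij => by simpa using hij) (X * D) hXD p
      (fun v hv => hpX _ (hpD v hv)) v hv hv0
    have hall (j : ℤ) : Finsupp.single j (1 : ℂ) ∈ p := by
      induction j using Int.inductionOn' (b := i) with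
      | zero => exact hi
      | succ k _ hk => exact hX k ▸ hpX _ hk
      | pred k _ hk =>
        have hk0 : β + (k : ℂ) ≠ 0 := fun h =>
          hβ (-k) (by rw [Int.cast_neg]; exact eq_neg_of_add_eq_zero_left h)
        exact (p.smul_mem_iff hk0).mp (hD k ▸ hpD _ hk)
    refine eq_top_iff.mpr fun w _ => ?_
    change w ∈ p
    induction w using Finsupp.induction_linear with
    | zero => exact p.zero_mem
    | add f g hf hg => exact p.add_mem (hf trivial) (hg trivial)
    | single j a =>
      rw [← Finsupp.smul_single_one]
      exact p.smul_mem a (hall j)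
  exact
    { exists_pair_ne := ⟨⊥, ⊤, bot_ne_top⟩
      eq_bot_or_eq_top := fun N => or_iff_not_imp_left.mpr (eq_top_of_ne_bot N) }
end

section
/- Let M be a simple module over the Weyl algebra A_n. Then every A_n-linear endomorphism of M is multiplication by a complex scalar, i.e. End_{A_n}(M) = ℂ. -/
set_option synthInstance.maxHeartbeats 1000000
set_option maxHeartbeats 1000000

open MvPolynomial in
/-- The Weyl algebra `A_n`, realized as the ℂ-subalgebra of `End_ℂ(ℂ[x₁,…,xₙ])` generated by
the multiplication operators by the variables and the formal partial derivatives. -/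
noncomputable def WeylAlgebra (n : ℕ) : Subalgebra ℂ (Module.End ℂ (MvPolynomial (Fin n) ℂ)) :=
  Algebra.adjoin ℂ
    ((Set.range fun i : Fin n => LinearMap.mulLeft ℂ (X i)) ∪
      (Set.range fun i : Fin n =>
        ((pderiv i : Derivation ℂ (MvPolynomial (Fin n) ℂ) (MvPolynomial (Fin n) ℂ)) :
          MvPolynomial (Fin n) ℂ →ₗ[ℂ] MvPolynomial (Fin n) ℂ)))

open Polynomial in
/-- If `a` is transcendental over a field `K` and `r c` is a right inverse of `a - c` for every
`c : K`, then the family `r` is linearly independent over `K`. -/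
theorem linearIndependent_of_sub_mul_eq_one_of_transcendental {K A : Type*} [Field K] [Ring A]
    [Algebra K A] {a : A} (ha : Transcendental K a) {r : K → A}
    (hr : ∀ c, (a - algebraMap K A c) * r c = 1) : LinearIndependent K r := by
  classical
  rw [transcendental_iff] at ha
  refine linearIndependent_iff'.2 fun s m hm i hi ↦ ?_
  have hmul (j : K) (hj : j ∈ s) :
      aeval a (∏ k ∈ s, (X - C k)) * r j = aeval a (∏ k ∈ s.erase j, (X - C k)) := by
    rw [← s.prod_erase_mul _ hj, map_mul, mul_assoc]
    simp [hr]
  have hp : ∑ j ∈ s, C (m j) * ∏ k ∈ s.erase j, (X - C k) = 0 := by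
    refine ha _ ?_
    calc aeval a (∑ j ∈ s, C (m j) * ∏ k ∈ s.erase j, (X - C k))
        = ∑ j ∈ s, m j • (aeval a (∏ k ∈ s, (X - C k)) * r j) := by
          rw [map_sum]
          refine Finset.sum_congr rfl fun j hj ↦ ?_
          rw [hmul j hj, map_mul, aeval_C, Algebra.smul_def]
      _ = aeval a (∏ k ∈ s, (X - C k)) * ∑ j ∈ s, m j • r j := by
          simp_rw [Finset.mul_sum, mul_smul_comm]
      _ = 0 := by rw [hm, mul_zero]
  have heval := congr(eval i $hp)
  rw [eval_finsetSum, eval_zero, Finset.sum_eq_single_of_mem i hi fun j hj hji ↦ ?_] at heval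
  · rw [eval_mul, eval_C, eval_prod] at heval
    refine (mul_eq_zero.1 heval).resolve_right (Finset.prod_ne_zero_iff.2 fun j hj ↦ ?_)
    simpa [sub_eq_zero] using (Finset.ne_of_mem_erase hj).symm
  · rw [eval_mul, eval_prod,
      Finset.prod_eq_zero (Finset.mem_erase.2 ⟨hji.symm, hi⟩) (by simp), mul_zero]

open Polynomial in
/-- Every algebraic element of a nontrivial algebra over an algebraically closed field has
nonempty spectrum. -/
theorem IsAlgebraic.spectrum_nonempty {K A : Type*} [Field K] [IsAlgClosed K] [Ring A]
    [Nontrivial A] [Algebra K A] {a : A} (ha : IsAlgebraic K a) : (spectrum K a).Nonempty := by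
  obtain ⟨p, hmonic, hp⟩ := ha.isIntegral
  rw [← aeval_def] at hp
  have hunit : ¬IsUnit (aeval a p) := by simp [hp]
  rw [(IsAlgClosed.splits p).eq_prod_roots_of_monic hmonic] at hunit
  obtain ⟨k, hk, _⟩ := spectrum.exists_mem_of_not_isUnit_aeval_prod hunit
  exact ⟨k, hk⟩

universe u v w

open Cardinal in
/-- Every element of a nontrivial algebra over an algebraically closed field `K` whose dimension is
smaller than the cardinality of `K` has nonempty spectrum. -/
theorem spectrum.nonempty_of_rank_lt_card {K : Type u} {A : Type v} [Field K] [IsAlgClosed K]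
    [Ring A] [Nontrivial A] [Algebra K A] (h : lift.{u} (Module.rank K A) < lift.{v} #K) (a : A) :
    (spectrum K a).Nonempty := by
  by_contra hempty
  have hunit (c : K) : IsUnit (a - algebraMap K A c) := by
    have hc : c ∉ spectrum K a := fun hc ↦ hempty ⟨c, hc⟩
    rw [spectrum.notMem_iff] at hc
    simpa using hc.neg
  have ha : Transcendental K a := fun ha ↦ hempty ha.spectrum_nonempty
  exact h.not_ge (linearIndependent_of_sub_mul_eq_one_of_transcendental ha
    fun c ↦ (hunit c).mul_val_inv).cardinal_lift_le_rank

open Cardinal in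
/-- **Dixmier's version of Schur's lemma**: if `R` is an algebra over an algebraically closed field
`K` and the dimension of `R` is smaller than the cardinality of `K`, then every endomorphism of a
simple `R`-module is multiplication by a scalar. -/
theorem IsSimpleModule.exists_algebraMap_eq_of_rank_lt_card {K : Type u} {R : Type v}
    {M : Type w} [Field K] [IsAlgClosed K] [Ring R] [Algebra K R] [AddCommGroup M]
    [Module K M] [Module R M]
    [IsScalarTower K R M] [IsSimpleModule R M] (h : lift.{u} (Module.rank K R) < lift.{v} #K)
    (φ : Module.End R M) : ∃ c : K, φ = algebraMap K (Module.End R M) c := by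
  have := IsSimpleModule.nontrivial R M
  obtain ⟨v, hv⟩ := exists_ne (0 : M)
  have hsurj := IsSimpleModule.toSpanSingleton_surjective R hv
  have hM := LinearMap.lift_rank_le_of_surjective
    ((LinearMap.toSpanSingleton R M v).restrictScalars K) hsurj
  let ev : Module.End R M →ₗ[K] M :=
    { toFun := fun ψ ↦ ψ v, map_add' := fun _ _ ↦ rfl, map_smul' := fun _ _ ↦ rfl }
  have hev : Function.Injective ev := fun ψ χ hψχ ↦ by
    ext x
    obtain ⟨r, rfl⟩ := hsurj x
    simpa [ev] using congr(r • $hψχ)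
  have hD := LinearMap.rank_le_of_injective ev hev
  have hlt : lift.{u} (Module.rank K (Module.End R M)) < lift.{w} #K := by
    rw [← lift_lt.{max u w, v}]
    calc lift.{v} (lift.{u} (Module.rank K (Module.End R M)))
        ≤ lift.{u} (lift.{v} (Module.rank K M)) := by simpa using hD
      _ ≤ lift.{u} (lift.{w} (Module.rank K R)) := lift_le.2 hM
      _ = lift.{w} (lift.{u} (Module.rank K R)) := by simp only [lift_lift]
      _ < lift.{w} (lift.{v} #K) := lift_lt.2 h
      _ = lift.{v} (lift.{w} #K) := by simp only [lift_lift]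
  obtain ⟨c, hc⟩ := spectrum.nonempty_of_rank_lt_card hlt φ
  rw [spectrum.mem_iff] at hc
  refine ⟨c, ?_⟩
  rw [Module.End.isUnit_iff] at hc
  exact (sub_eq_zero.1 ((LinearMap.bijective_or_eq_zero _).resolve_left hc)).symm

open Cardinal in
theorem rank_weylAlgebra_le_aleph0 (n : ℕ) : Module.rank ℂ (WeylAlgebra n) ≤ ℵ₀ :=
  (Algebra.rank_adjoin_le _).trans (max_le
    (le_aleph0_iff_set_countable.2 ((Set.countable_range _).union (Set.countable_range _))) le_rfl)

/-- every `A_n`-linear endomorphism of a simple module `M` over the Weyl algebra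
`A_n` is multiplication by a complex scalar, i.e. `End_{A_n}(M) = ℂ`. -/
theorem stmt3 (n : ℕ) (M : Type*) [AddCommGroup M] [Module (WeylAlgebra n) M]
    (hM : IsSimpleModule (WeylAlgebra n) M) (φ : M →ₗ[WeylAlgebra n] M) :
    ∃ c : ℂ, ∀ x : M, φ x = algebraMap ℂ (WeylAlgebra n) c • x := by
  let _ : Module ℂ M := Module.compHom M (algebraMap ℂ (WeylAlgebra n))
  have : IsScalarTower ℂ (WeylAlgebra n) M := .of_algebraMap_smul fun _ _ ↦ rfl
  have hrank : Module.rank ℂ (WeylAlgebra n) < Cardinal.mk ℂ :=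
    (rank_weylAlgebra_le_aleph0 n).trans_lt
      (Cardinal.mk_complex ▸ Cardinal.aleph0_lt_continuum)
  obtain ⟨c, rfl⟩ := IsSimpleModule.exists_algebraMap_eq_of_rank_lt_card (K := ℂ)
    (R := WeylAlgebra n) (M := M) (Cardinal.lift_lt.2 hrank) φ
  exact ⟨c, fun _ ↦ rfl⟩
end

section
/- Let A and B be ℂ-algebras, M a simple A-module such that every A-linear endomorphism of M is multiplication by a complex scalar, and N a simple B-module. Then the external product M ⊗_ℂ N is a simple module over A ⊗_ℂ B. -/
set_option synthInstance.maxHeartbeats 1000000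
set_option maxHeartbeats 1000000

open scoped TensorProduct

/-- If every `A`-linear endomorphism of a simple module `M` is a scalar from `k`, then `A` acts
densely on `M` by `k`-linear endomorphisms. -/
theorem exists_smul_eq_of_end_scalar {k A M : Type*} [CommRing k] [Ring A] [Algebra k A]
    [AddCommGroup M] [Module k M] [Module A M] [IsScalarTower k A M] [IsSimpleModule A M]
    (hend : ∀ φ : M →ₗ[A] M, ∃ c : k, ∀ x : M, φ x = algebraMap k A c • x)
    (f : M →ₗ[k] M) (s : Finset M) : ∃ a : A, ∀ m ∈ s, f m = a • m :=
  jacobson_density (R := A)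
    { toFun := f
      map_add' := f.map_add
      map_smul' := fun φ x ↦ by
        obtain ⟨c, hc⟩ := hend φ
        simp only [Module.End.smul_def, RingHom.id_apply, hc, algebraMap_smul, map_smul] } s

/-- let `A`, `B` be ℂ-algebras, `M` a simple `A`-module all of whose `A`-linear
endomorphisms are multiplication by complex scalars, and `N` a simple `B`-module.  Then the
external product `M ⊗[ℂ] N`, with the `A ⊗[ℂ] B`-module structure determined by
`(a ⊗ b) • (u ⊗ v) = (a • u) ⊗ (b • v)`, is a simple `A ⊗[ℂ] B`-module. -/
theorem stmt4 (A B : Type*) [Ring A] [Ring B] [Algebra ℂ A] [Algebra ℂ B]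
    (M N : Type*) [AddCommGroup M] [Module ℂ M] [Module A M] [IsScalarTower ℂ A M]
    [AddCommGroup N] [Module ℂ N] [Module B N] [IsScalarTower ℂ B N]
    [Module (A ⊗[ℂ] B) (M ⊗[ℂ] N)]
    (hsmul : ∀ (a : A) (b : B) (u : M) (v : N),
      (a ⊗ₜ[ℂ] b) • (u ⊗ₜ[ℂ] v) = (a • u) ⊗ₜ[ℂ] (b • v))
    (hM : IsSimpleModule A M)
    (hMend : ∀ φ : M →ₗ[A] M, ∃ c : ℂ, ∀ x : M, φ x = algebraMap ℂ A c • x)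
    (hN : IsSimpleModule B N) :
    IsSimpleModule (A ⊗[ℂ] B) (M ⊗[ℂ] N) := by
  classical
  refine isSimpleModule_iff_toSpanSingleton_surjective.mpr ⟨?_, fun x hx ↦ ?_⟩
  · have := IsSimpleModule.nontrivial A M
    have := IsSimpleModule.nontrivial B N
    infer_instance
  let ℬ := Module.Basis.ofVectorSpace ℂ M
  obtain ⟨c, rfl⟩ := TensorProduct.eq_repr_basis_left ℬ x
  obtain ⟨i, hi⟩ : ∃ i, c i ≠ 0 := by
    by_contra! h
    exact hx (by simp [show c = 0 from Finsupp.ext h])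
  obtain ⟨a, ha⟩ := exists_smul_eq_of_end_scalar hMend
    ((ℬ.coord i).smulRight (ℬ i)) (c.support.image ℬ)
  have hpure : (a ⊗ₜ[ℂ] (1 : B)) • (c.sum fun j n ↦ ℬ j ⊗ₜ[ℂ] n) = ℬ i ⊗ₜ[ℂ] c i := by
    have hterm : ∀ j ∈ c.support, (a ⊗ₜ[ℂ] (1 : B)) • (ℬ j ⊗ₜ[ℂ] c j) =
        if j = i then ℬ i ⊗ₜ[ℂ] c i else 0 := fun j hj ↦ by
      rw [hsmul, one_smul, ← ha _ (Finset.mem_image_of_mem ℬ hj)]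
      obtain rfl | hne := eq_or_ne j i
      · simp
      · simp [hne]
    rw [Finsupp.sum, Finset.smul_sum, Finset.sum_congr rfl hterm]
    simp [hi]
  rw [← LinearMap.range_eq_top, eq_top_iff]
  rintro y -
  induction y using TensorProduct.induction_on with
  | zero => exact zero_mem _
  | add y z hy hz => exact add_mem hy hz
  | tmul u v =>
    obtain ⟨r, rfl⟩ := IsSimpleModule.toSpanSingleton_surjective A (ℬ.ne_zero i) u
    obtain ⟨t, rfl⟩ := IsSimpleModule.toSpanSingleton_surjective B hi v
    refine ⟨(r ⊗ₜ[ℂ] t) * (a ⊗ₜ[ℂ] 1), ?_⟩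
    simp only [LinearMap.toSpanSingleton_apply]
    rw [mul_smul, hpure, hsmul]
end

section
/- (Normal form lemma.) Let m ≥ 2, |β| ∈ ℂ, and c₃,…,c_m be pairwise distinct nonzero complex numbers. Set α₁ = x, α₂ = y, αⱼ = cⱼx + y for 3 ≤ j ≤ m, and in A₂ define P = X∂x + Y∂y − |β| and Q = (Π_{j=2}^m Aⱼ)∂y − Σ_{i=2}^m βᵢ Π_{j=2, j≠i}^m Aⱼ, where Aⱼ denotes the operator of multiplication by αⱼ and β₂,…,β_m ∈ ℂ with β₂+⋯+β_m arbitrary. Let N₀ ⊆ A₂ be the ℂ-linear span of the operators (Y∂x)^k for k ≥ 1, (Y∂x)^k(Y∂y)^l for k,l ≥ 1 with k+l ≤ m−2, and (Y∂y)^l(X∂y)^k for 0 ≤ l ≤ m−2 and k ≥ 0. Then every T ∈ A₂ that commutes with the Euler operator E = X∂x + Y∂y lies in N₀ + A₂P + A₂Q. -/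
set_option synthInstance.maxHeartbeats 1000000
set_option maxHeartbeats 1000000

open MvPolynomial

/-- Multiplication by the first variable `x`, as an endomorphism of `ℂ[x,y]`. -/
noncomputable def Xop : Module.End ℂ (MvPolynomial (Fin 2) ℂ) := LinearMap.mulLeft ℂ (X 0)

/-- Multiplication by the second variable `y`, as an endomorphism of `ℂ[x,y]`. -/
noncomputable def Yop : Module.End ℂ (MvPolynomial (Fin 2) ℂ) := LinearMap.mulLeft ℂ (X 1)

/-- The formal partial derivative `∂x`, as an endomorphism of `ℂ[x,y]`. -/
noncomputable def Dxop : Module.End ℂ (MvPolynomial (Fin 2) ℂ) :=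
  (pderiv (0 : Fin 2) : Derivation ℂ (MvPolynomial (Fin 2) ℂ) (MvPolynomial (Fin 2) ℂ)).toLinearMap

/-- The formal partial derivative `∂y`, as an endomorphism of `ℂ[x,y]`. -/
noncomputable def Dyop : Module.End ℂ (MvPolynomial (Fin 2) ℂ) :=
  (pderiv (1 : Fin 2) : Derivation ℂ (MvPolynomial (Fin 2) ℂ) (MvPolynomial (Fin 2) ℂ)).toLinearMap

/-- The Weyl algebra `A₂`, realized as the ℂ-subalgebra of `End_ℂ(ℂ[x,y])` generated by
`X`, `Y`, `∂x`, `∂y`. -/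
noncomputable def A2 : Subalgebra ℂ (Module.End ℂ (MvPolynomial (Fin 2) ℂ)) :=
  Algebra.adjoin ℂ {Xop, Yop, Dxop, Dyop}

/-- `X`, `Y`, `∂x`, `∂y` as elements of `A₂`. -/
noncomputable def wX : A2 := ⟨Xop, Algebra.subset_adjoin (by simp)⟩
noncomputable def wY : A2 := ⟨Yop, Algebra.subset_adjoin (by simp)⟩
noncomputable def wDx : A2 := ⟨Dxop, Algebra.subset_adjoin (by simp)⟩
noncomputable def wDy : A2 := ⟨Dyop, Algebra.subset_adjoin (by simp)⟩

/-- The operator `Aⱼ` of multiplication by the linear form `αⱼ`, where `α₂ = y` and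
`αⱼ = cⱼ·x + y` for `j ≥ 3`, as an element of `A₂`. -/
noncomputable def mulForm (c : ℕ → ℂ) (j : ℕ) : A2 := if j = 2 then wY else c j • wX + wY

/-- Commutation relations of the second Weyl algebra, with `p = ∂x` and `q = ∂y`. -/
structure WeylRel {A : Type*} [Ring A] (x y p q : A) : Prop where
  xy : x * y = y * x
  pq : p * q = q * p
  px : p * x = x * p + 1
  qy : q * y = y * q + 1
  py : p * y = y * p
  qx : q * x = x * q

/-- The normally ordered monomial `x^i y^j p^k q^l`. -/
def weylMon {A : Type*} [Ring A] (x y p q : A) (i j k l : ℕ) : A :=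
  x ^ i * y ^ j * p ^ k * q ^ l

/-- The span of the normally ordered monomials of weight `w` whose pair
(order, `j + k`) is lexicographically smaller than `(n, s)`. -/
def weylFil {A : Type*} [Ring A] [Algebra ℂ A] (x y p q : A) (w : ℤ) (n s : ℕ) :
    Submodule ℂ A :=
  Submodule.span ℂ {t | ∃ i j k l : ℕ, (i : ℤ) + j - k - l = w ∧
    (k + l < n ∨ (k + l = n ∧ j + k < s)) ∧ t = weylMon x y p q i j k l}

section Weyl

variable {A : Type*} [Ring A] {x y p q : A}

theorem weylMon_mul_p (h : WeylRel x y p q) (i j k l : ℕ) :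
    weylMon x y p q i j k l * p = weylMon x y p q i j (k + 1) l := by
  have h2 : q ^ l * p = p * q ^ l := (Commute.pow_left (show Commute q p from h.pq.symm) l)
  unfold weylMon
  rw [mul_assoc, h2]
  simp only [mul_assoc, pow_succ]

theorem weylMon_mul_q (i j k l : ℕ) :
    weylMon x y p q i j k l * q = weylMon x y p q i j k (l + 1) := by
  unfold weylMon
  simp only [mul_assoc, pow_succ]

theorem weylMon_zero : weylMon x y p q 0 0 0 0 = 1 := by simp [weylMon]

theorem yp_pow_eq_weylMon (h : WeylRel x y p q) (k : ℕ) :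
    (y * p) ^ k = weylMon x y p q 0 k k 0 := by
  rw [Commute.mul_pow (show Commute y p from h.py.symm)]
  simp [weylMon]

variable [Algebra ℂ A]

theorem pow_mul_of_weyl {u v : A} (h : u * v = v * u + 1) (n : ℕ) :
    u ^ n * v = v * u ^ n + (n : ℂ) • u ^ (n - 1) := by
  induction n with
  | zero => simp
  | succ n ih =>
    have hn : (n : ℂ) • (u * u ^ (n - 1)) = (n : ℂ) • u ^ n := by
      cases n with
      | zero => simp
      | succ n => simp [pow_succ']
    rw [pow_succ', mul_assoc, ih, mul_add, mul_smul_comm, hn, ← mul_assoc, h, add_mul,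
      mul_assoc, one_mul, add_assoc]
    congr 1
    push_cast
    rw [add_smul, one_smul, add_comm]

theorem weylMon_mul_x (h : WeylRel x y p q) (i j k l : ℕ) :
    weylMon x y p q i j k l * x =
      weylMon x y p q (i + 1) j k l + (k : ℂ) • weylMon x y p q i j (k - 1) l := by
  have h1 : q ^ l * x = x * q ^ l := (Commute.pow_left (show Commute q x from h.qx) l)
  have h2 : y ^ j * x = x * y ^ j := (Commute.pow_left (show Commute y x from h.xy.symm) j)
  have h3 := pow_mul_of_weyl h.px k
  unfold weylMon
  calc _ = x ^ i * y ^ j * p ^ k * (q ^ l * x) := by noncomm_ring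
    _ = x ^ i * y ^ j * (p ^ k * x) * q ^ l := by rw [h1]; simp only [mul_assoc]
    _ = x ^ i * (y ^ j * x) * p ^ k * q ^ l + (k : ℂ) • (x ^ i * y ^ j * p ^ (k - 1) * q ^ l) := by
      rw [h3]; simp only [mul_add, add_mul, mul_assoc, mul_smul_comm, smul_mul_assoc]
    _ = _ := by rw [h2]; simp only [mul_assoc, pow_succ]

theorem weylMon_mul_y (h : WeylRel x y p q) (i j k l : ℕ) :
    weylMon x y p q i j k l * y =
      weylMon x y p q i (j + 1) k l + (l : ℂ) • weylMon x y p q i j k (l - 1) := by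
  have h2 : p ^ k * y = y * p ^ k := (Commute.pow_left (show Commute p y from h.py) k)
  have h3 := pow_mul_of_weyl h.qy l
  unfold weylMon
  calc _ = x ^ i * y ^ j * p ^ k * (q ^ l * y) := by simp only [mul_assoc]
    _ = x ^ i * y ^ j * (p ^ k * y) * q ^ l + (l : ℂ) • (x ^ i * y ^ j * p ^ k * q ^ (l - 1)) := by
      rw [h3]; simp only [mul_add, mul_assoc, mul_smul_comm]
    _ = _ := by rw [h2]; simp only [mul_assoc, pow_succ]

theorem weylMon_mem_weylFil {w : ℤ} {n s i j k l : ℕ} (hw : (i : ℤ) + j - k - l = w)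
    (hs : k + l < n ∨ (k + l = n ∧ j + k < s)) :
    weylMon x y p q i j k l ∈ weylFil x y p q w n s :=
  Submodule.subset_span ⟨i, j, k, l, hw, hs, rfl⟩

theorem weylFil_le_iff {w : ℤ} {n s : ℕ} {V : Submodule ℂ A} :
    weylFil x y p q w n s ≤ V ↔ ∀ i j k l : ℕ, (i : ℤ) + j - k - l = w →
      (k + l < n ∨ (k + l = n ∧ j + k < s)) → weylMon x y p q i j k l ∈ V := by
  unfold weylFil
  rw [Submodule.span_le]
  constructor
  · exact fun H i j k l hw hs => H ⟨i, j, k, l, hw, hs, rfl⟩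
  · rintro H _ ⟨i, j, k, l, hw, hs, rfl⟩
    exact H i j k l hw hs

theorem weylFil_mono {w : ℤ} {n s n' s' : ℕ} (h : n < n' ∨ (n = n' ∧ s ≤ s')) :
    weylFil x y p q w n s ≤ weylFil x y p q w n' s' :=
  weylFil_le_iff.2 fun _ _ _ _ hw hs => weylMon_mem_weylFil hw (by omega)

/-- A right multiplication maps one filtration piece to another as soon as it does so on
monomials. -/
theorem mul_mem_of_weylMon_mul_mem {w : ℤ} {n s : ℕ} {V : Submodule ℂ A} {r : A}
    (H : ∀ i j k l : ℕ, (i : ℤ) + j - k - l = w →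
      (k + l < n ∨ (k + l = n ∧ j + k < s)) → weylMon x y p q i j k l * r ∈ V)
    {t : A} (ht : t ∈ weylFil x y p q w n s) : t * r ∈ V :=
  (weylFil_le_iff (V := V.comap (LinearMap.mulRight ℂ r))).2 H ht

theorem smul_weylMon_mem {w : ℤ} {n s i j k l a : ℕ}
    (H : a ≠ 0 → weylMon x y p q i j k l ∈ weylFil x y p q w n s) :
    (a : ℂ) • weylMon x y p q i j k l ∈ weylFil x y p q w n s := by
  by_cases ha : a = 0
  · simp [ha]
  · exact Submodule.smul_mem _ _ (H ha)

theorem weylMon_mul_x_sub_mem (h : WeylRel x y p q) {w : ℤ} (i j k l : ℕ)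
    (hw : (i : ℤ) + j - k - l = w) :
    weylMon x y p q i j k l * x - weylMon x y p q (i + 1) j k l ∈
      weylFil x y p q (w + 1) (k + l) 0 := by
  rw [weylMon_mul_x h, add_sub_cancel_left]
  exact smul_weylMon_mem fun hk => weylMon_mem_weylFil (by omega) (by omega)

theorem weylMon_mul_y_sub_mem (h : WeylRel x y p q) {w : ℤ} (i j k l : ℕ)
    (hw : (i : ℤ) + j - k - l = w) :
    weylMon x y p q i j k l * y - weylMon x y p q i (j + 1) k l ∈
      weylFil x y p q (w + 1) (k + l) 0 := by
  rw [weylMon_mul_y h, add_sub_cancel_left]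
  exact smul_weylMon_mem fun hk => weylMon_mem_weylFil (by omega) (by omega)

theorem mul_x_mem_weylFil (h : WeylRel x y p q) {w : ℤ} {n s : ℕ} {t : A}
    (ht : t ∈ weylFil x y p q w n s) : t * x ∈ weylFil x y p q (w + 1) n s := by
  refine mul_mem_of_weylMon_mul_mem (fun i j k l hw hs => ?_) ht
  rw [← sub_add_cancel (_ * x) (weylMon x y p q (i + 1) j k l)]
  exact add_mem (weylFil_mono (by omega) (weylMon_mul_x_sub_mem h i j k l hw))
    (weylMon_mem_weylFil (by push_cast; omega) hs)

theorem mul_y_mem_weylFil (h : WeylRel x y p q) {w : ℤ} {n s : ℕ} {t : A}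
    (ht : t ∈ weylFil x y p q w n s) : t * y ∈ weylFil x y p q (w + 1) n (s + 1) := by
  refine mul_mem_of_weylMon_mul_mem (fun i j k l hw hs => ?_) ht
  rw [← sub_add_cancel (_ * y) (weylMon x y p q i (j + 1) k l)]
  exact add_mem (weylFil_mono (by omega) (weylMon_mul_y_sub_mem h i j k l hw))
    (weylMon_mem_weylFil (by push_cast; omega) (by omega))

theorem mul_q_mem_weylFil {w : ℤ} {n s : ℕ} {t : A}
    (ht : t ∈ weylFil x y p q w n s) : t * q ∈ weylFil x y p q (w - 1) (n + 1) s := by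
  refine mul_mem_of_weylMon_mul_mem (fun i j k l hw hs => ?_) ht
  rw [weylMon_mul_q]
  exact weylMon_mem_weylFil (by push_cast; omega) (by omega)

/-- A linear form `a x + y` in the commuting operators `x`, `y`. -/
def IsMonicForm (x y f : A) : Prop := ∃ a : ℂ, f = a • x + y

theorem mul_form_mem_weylFil (h : WeylRel x y p q) {w : ℤ} {n s : ℕ} {t f : A}
    (hf : IsMonicForm x y f) (ht : t ∈ weylFil x y p q w n s) :
    t * f ∈ weylFil x y p q (w + 1) n (s + 1) := by
  obtain ⟨a, rfl⟩ := hf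
  rw [mul_add, mul_smul_comm]
  exact add_mem (Submodule.smul_mem _ _ (weylFil_mono (by omega) (mul_x_mem_weylFil h ht)))
    (mul_y_mem_weylFil h ht)

theorem mul_prod_mem_weylFil (h : WeylRel x y p q) (L : List A)
    (hL : ∀ f ∈ L, IsMonicForm x y f) {w : ℤ} {n s : ℕ} {t : A}
    (ht : t ∈ weylFil x y p q w n s) :
    t * L.prod ∈ weylFil x y p q (w + L.length) n (s + L.length) := by
  induction L generalizing t w s with
  | nil => simpa using ht
  | cons f L ih =>
    rw [List.forall_mem_cons] at hL
    rw [List.prod_cons, ← mul_assoc]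
    have := ih hL.2 (mul_form_mem_weylFil h hL.1 ht)
    rw [List.length_cons]
    push_cast
    convert this using 1
    congr 1 <;> ring

theorem weylMon_mul_form_sub_mem (h : WeylRel x y p q) {w : ℤ} {f : A}
    (hf : IsMonicForm x y f) (i j k l : ℕ) (hw : (i : ℤ) + j - k - l = w) :
    weylMon x y p q i j k l * f - weylMon x y p q i (j + 1) k l ∈
      weylFil x y p q (w + 1) (k + l) (j + 1 + k) := by
  obtain ⟨a, rfl⟩ := hf
  rw [mul_add, mul_smul_comm, add_sub_assoc]
  refine add_mem (Submodule.smul_mem _ _ ?_)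
    (weylFil_mono (by omega) (weylMon_mul_y_sub_mem h i j k l hw))
  rw [← sub_add_cancel (_ * x) (weylMon x y p q (i + 1) j k l)]
  exact add_mem (weylFil_mono (by omega) (weylMon_mul_x_sub_mem h i j k l hw))
    (weylMon_mem_weylFil (by push_cast; omega) (by omega))

theorem weylMon_mul_prod_sub_mem (h : WeylRel x y p q) (L : List A)
    (hL : ∀ f ∈ L, IsMonicForm x y f) {w : ℤ} (i j k l : ℕ) (hw : (i : ℤ) + j - k - l = w) :
    weylMon x y p q i j k l * L.prod - weylMon x y p q i (j + L.length) k l ∈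
      weylFil x y p q (w + L.length) (k + l) (j + L.length + k) := by
  induction L generalizing j w with
  | nil => simp
  | cons f L ih =>
    rw [List.forall_mem_cons] at hL
    have h1 := mul_prod_mem_weylFil h L hL.2 (weylMon_mul_form_sub_mem h hL.1 i j k l hw)
    have h2 := ih hL.2 (w := w + 1) (j + 1) (by push_cast; omega)
    rw [List.prod_cons, List.length_cons]
    push_cast
    convert add_mem (weylFil_mono (by omega) h1) h2 using 1
    · congr 1 <;> ring
    · rw [sub_mul, mul_assoc, show j + (L.length + 1) = j + 1 + L.length by ring]
      abel

theorem weylMon_mul_yq (h : WeylRel x y p q) (i j k l : ℕ) :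
    weylMon x y p q i j k l * (y * q) =
      weylMon x y p q i (j + 1) k (l + 1) + (l : ℂ) • weylMon x y p q i j k l := by
  rw [← mul_assoc, weylMon_mul_y h, add_mul, smul_mul_assoc, weylMon_mul_q, weylMon_mul_q]
  cases l <;> simp

theorem weylMon_mul_xp (h : WeylRel x y p q) (i j k l : ℕ) :
    weylMon x y p q i j k l * (x * p) =
      weylMon x y p q (i + 1) j (k + 1) l + (k : ℂ) • weylMon x y p q i j k l := by
  rw [← mul_assoc, weylMon_mul_x h, add_mul, smul_mul_assoc, weylMon_mul_p h, weylMon_mul_p h]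
  cases k <;> simp

theorem mul_yq_pow_sub_mem (h : WeylRel x y p q) {t : A} {i j k l : ℕ} (hw : i + j = k + l)
    (ht : t - weylMon x y p q i j k l ∈ weylFil x y p q 0 (k + l) (j + k)) (e : ℕ) :
    t * (y * q) ^ e - weylMon x y p q i (j + e) k (l + e) ∈
      weylFil x y p q 0 (k + (l + e)) (j + e + k) := by
  induction e with
  | zero => simpa using ht
  | succ e ih =>
    have h1 := mul_q_mem_weylFil (mul_y_mem_weylFil h ih)
    rw [mul_assoc, sub_mul, weylMon_mul_yq h, zero_add, sub_self] at h1
    have h2 : ((l + e : ℕ) : ℂ) • weylMon x y p q i (j + e) k (l + e) ∈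
        weylFil x y p q 0 (k + (l + (e + 1))) (j + (e + 1) + k) :=
      Submodule.smul_mem _ _ (weylMon_mem_weylFil (by push_cast; omega) (by omega))
    convert add_mem (weylFil_mono (by omega) h1) h2 using 1
    rw [pow_succ, ← mul_assoc t, ← add_assoc j, ← add_assoc l]
    abel

theorem mul_xq_pow_sub_mem (h : WeylRel x y p q) {t : A} {i j k l : ℕ} (hw : i + j = k + l)
    (ht : t - weylMon x y p q i j k l ∈ weylFil x y p q 0 (k + l) (j + k)) (e : ℕ) :
    t * (x * q) ^ e - weylMon x y p q (i + e) j k (l + e) ∈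
      weylFil x y p q 0 (k + (l + e)) (j + k) := by
  induction e with
  | zero => simpa using ht
  | succ e ih =>
    have h1 := mul_q_mem_weylFil (mul_x_mem_weylFil h ih)
    have h2 := mul_q_mem_weylFil
      (weylMon_mul_x_sub_mem h (w := 0) (i + e) j k (l + e) (by push_cast; omega))
    rw [add_sub_cancel_right] at h1 h2
    have h3 : weylFil x y p q 0 (k + (l + e) + 1) 0 ≤
        weylFil x y p q 0 (k + (l + (e + 1))) (j + k) := weylFil_mono (by omega)
    convert add_mem (weylFil_mono (by omega) h1) (h3 h2) using 1
    rw [sub_mul (_ * x), weylMon_mul_q, pow_succ, ← add_assoc i, ← add_assoc l]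
    noncomm_ring

theorem yp_pow_mul_yq_pow_sub_mem (h : WeylRel x y p q) (k l : ℕ) :
    (y * p) ^ k * (y * q) ^ l - weylMon x y p q 0 (k + l) k l ∈
      weylFil x y p q 0 (k + l) (k + l + k) := by
  simpa using mul_yq_pow_sub_mem h (i := 0) (j := k) (k := k) (l := 0) (by omega)
    (t := (y * p) ^ k) (by simp [yp_pow_eq_weylMon h]) l

theorem yq_pow_mul_xq_pow_sub_mem (h : WeylRel x y p q) (l k : ℕ) :
    (y * q) ^ l * (x * q) ^ k - weylMon x y p q k l 0 (l + k) ∈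
      weylFil x y p q 0 (l + k) l := by
  simpa using mul_xq_pow_sub_mem h (i := 0) (j := l) (k := 0) (l := l) (by omega)
    (t := (y * q) ^ l) (by simpa using yp_pow_mul_yq_pow_sub_mem h 0 l) k

/-- Modulo lower order, right multiples of the Euler relation exchange `x p` and `-y q`. -/
theorem weylMon_mem_iff_shift (h : WeylRel x y p q) {b : ℂ} {J : Submodule ℂ A} {n : ℕ}
    (hP : ∀ t, t * (x * p + y * q - algebraMap ℂ A b) ∈ J)
    (hJ : weylFil x y p q 0 n 0 ≤ J) {i j k l : ℕ} (e : ℕ) (hw : i + j = k + l)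
    (hn : k + l + e = n) :
    weylMon x y p q (i + e) j (k + e) l ∈ J ↔ weylMon x y p q i (j + e) k (l + e) ∈ J := by
  induction e generalizing i k with
  | zero => rfl
  | succ e ih =>
    rw [show i + (e + 1) = (i + 1) + e by ring, show k + (e + 1) = (k + 1) + e by ring,
      ih (by omega) (by omega)]
    have h1 := hP (weylMon x y p q i (j + e) k (l + e))
    have h2 : weylMon x y p q i (j + e) k (l + e) ∈ J :=
      hJ (weylMon_mem_weylFil (by push_cast; omega) (by omega))
    rw [mul_sub, mul_add, weylMon_mul_xp h, weylMon_mul_yq h, ← Algebra.commutes,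
      ← Algebra.smul_def] at h1
    have h3 : weylMon x y p q (i + 1) (j + e) (k + 1) (l + e) +
        weylMon x y p q i (j + (e + 1)) k (l + (e + 1)) ∈ J := by
      convert add_mem h1 (J.smul_mem (b - (k : ℂ) - ((l + e : ℕ) : ℂ)) h2) using 1
      rw [sub_smul, sub_smul, ← add_assoc j, ← add_assoc l]
      abel
    constructor
    · intro h4
      simpa using sub_mem h3 h4
    · intro h4
      simpa using sub_mem h3 h4

theorem weylMon_mem_of_mem (h : WeylRel x y p q) {b : ℂ} {J : Submodule ℂ A} {n : ℕ}
    (hP : ∀ t, t * (x * p + y * q - algebraMap ℂ A b) ∈ J)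
    (hJ : weylFil x y p q 0 n 0 ≤ J) {i j k l i' j' k' l' : ℕ} (hw : i + j = k + l)
    (hw' : i' + j' = k' + l') (hn : k + l = n) (hn' : k' + l' = n) (hs : j + k = j' + k')
    (hmem : weylMon x y p q i' j' k' l' ∈ J) : weylMon x y p q i j k l ∈ J := by
  rcases le_total k k' with hk | hk
  · obtain ⟨e, rfl⟩ := Nat.exists_eq_add_of_le hk
    obtain rfl : i' = i + e := by omega
    obtain rfl : j = j' + e := by omega
    obtain rfl : l = l' + e := by omega
    exact (weylMon_mem_iff_shift h hP hJ e (by omega) (by omega)).1 hmem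
  · obtain ⟨e, rfl⟩ := Nat.exists_eq_add_of_le hk
    obtain rfl : i = i' + e := by omega
    obtain rfl : j' = j + e := by omega
    obtain rfl : l' = l + e := by omega
    exact (weylMon_mem_iff_shift h hP hJ e (by omega) (by omega)).2 hmem

/-- Weight-zero monomials lie in every subspace which contains the left multiples of `P` and `Q`
and the listed normal forms. -/
theorem weylMon_mem_of_normalForms (h : WeylRel x y p q) {m : ℕ} (hm : 2 ≤ m) {b : ℂ}
    {L : List A} (hL : ∀ f ∈ L, IsMonicForm x y f) (hlen : L.length = m - 1) {R : A}
    (hR : ∀ i j k l : ℕ, i + j + (m - 2) = k + l →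
      weylMon x y p q i j k l * R ∈ weylFil x y p q 0 (k + l + 1) 0)
    {J : Submodule ℂ A}
    (hP : ∀ t, t * (x * p + y * q - algebraMap ℂ A b) ∈ J)
    (hQ : ∀ t, t * (L.prod * q - R) ∈ J)
    (hyp : ∀ k, 1 ≤ k → (y * p) ^ k ∈ J)
    (hypq : ∀ k l, 1 ≤ k → 1 ≤ l → k + l ≤ m - 2 → (y * p) ^ k * (y * q) ^ l ∈ J)
    (hyxq : ∀ l k, l ≤ m - 2 → (y * q) ^ l * (x * q) ^ k ∈ J)
    (n s : ℕ) {i j k l : ℕ} (hw : i + j = k + l) (hn : k + l = n) (hs : j + k = s) :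
    weylMon x y p q i j k l ∈ J := by
  induction n using Nat.strong_induction_on generalizing s i j k l with
  | _ n ihn =>
  induction s using Nat.strong_induction_on generalizing i j k l with
  | _ s ihs =>
  have hfil : weylFil x y p q 0 n s ≤ J := weylFil_le_iff.2 fun i' j' k' l' hw' hs' => by
    rcases hs' with hs' | ⟨hs', hs''⟩
    · exact ihn _ hs' _ (by omega) rfl rfl
    · exact ihs _ hs'' (by omega) hs' rfl
  have key : ∀ i' j' k' l' : ℕ, i' + j' = n → k' + l' = n → j' + k' = s →
      weylMon x y p q i' j' k' l' ∈ J → weylMon x y p q i j k l ∈ J :=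
    fun i' j' k' l' h1 h2 h3 => weylMon_mem_of_mem h hP
      ((weylFil_mono (by omega)).trans hfil) hw (by omega) hn h2 (by omega)
  have lead : ∀ {t u : A}, t ∈ J → t - u ∈ weylFil x y p q 0 n s → u ∈ J := fun ht htu => by
    simpa using sub_mem ht (hfil htu)
  by_cases h0 : n = 0
  · refine key 0 0 0 0 (by omega) (by omega) (by omega) ?_
    simpa [weylMon_zero] using hyxq 0 0 (by omega)
  by_cases h1 : s = 2 * n
  · refine key 0 n n 0 (by omega) (by omega) (by omega) ?_
    rw [← yp_pow_eq_weylMon h]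
    exact hyp n (by omega)
  by_cases h2 : s ≤ n ∧ s ≤ m - 2
  · refine key (n - s) s 0 (s + (n - s)) (by omega) (by omega) (by omega) ?_
    refine lead (hyxq s (n - s) h2.2) ?_
    convert yq_pow_mul_xq_pow_sub_mem h s (n - s) using 2
    omega
  by_cases h3 : n < s ∧ n ≤ m - 2
  · obtain ⟨k', rfl⟩ := Nat.exists_eq_add_of_lt h3.1
    obtain ⟨l', rfl⟩ : ∃ l', n = k' + 1 + l' := Nat.exists_eq_add_of_le (by omega)
    refine key 0 (k' + 1 + l') (k' + 1) l' (by omega) (by omega) (by omega) ?_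
    exact lead (hypq (k' + 1) l' (by omega) (by omega) (by omega))
      (yp_pow_mul_yq_pow_sub_mem h (k' + 1) l')
  · obtain ⟨i', j', k', l', hj, hk, hi⟩ : ∃ i' j' k' l' : ℕ,
        j' + k' + (m - 1) = s ∧ k' + l' + 1 = n ∧ i' + j' + (m - 1) = n := by
      rcases le_total (s - (m - 1)) (n - 1) with hc | hc
      · exact ⟨n - (m - 1), 0, s - (m - 1), n - 1 - (s - (m - 1)), by omega, by omega, by omega⟩
      · exact ⟨2 * n - 1 - s, s - (m - 1) - (n - 1), n - 1, 0, by omega, by omega, by omega⟩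
    refine key i' (j' + (m - 1)) k' (l' + 1) (by omega) (by omega) (by omega) ?_
    refine lead (hQ (weylMon x y p q i' j' k' l')) ?_
    have h4 := mul_q_mem_weylFil
      (weylMon_mul_prod_sub_mem h L hL (w := -(m - 2 : ℕ)) i' j' k' l' (by omega))
    rw [hlen, sub_mul, weylMon_mul_q] at h4
    have h5 : weylMon x y p q i' j' k' l' * R ∈ weylFil x y p q 0 n s :=
      weylFil_mono (by omega) (hR i' j' k' l' (by omega))
    have h6 : (-(m - 2 : ℕ) + (m - 1 : ℕ) - 1 : ℤ) = 0 := by omega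
    rw [h6] at h4
    convert sub_mem (weylFil_mono (by omega) h4) h5 using 1
    noncomm_ring

/-- The commutator with the Euler operator `x p + y q`. -/
noncomputable def adEuler (x y p q : A) : Module.End ℂ A :=
  LinearMap.mulLeft ℂ (x * p + y * q) - LinearMap.mulRight ℂ (x * p + y * q)

theorem adEuler_apply (t : A) :
    adEuler x y p q t = (x * p + y * q) * t - t * (x * p + y * q) := rfl

theorem adEuler_mul (t u : A) :
    adEuler x y p q (t * u) = adEuler x y p q t * u + t * adEuler x y p q u := by
  simp only [adEuler_apply]
  noncomm_ring

theorem adEuler_mul_eigen {t u : A} {a c : ℂ} (ht : adEuler x y p q t = a • t)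
    (hu : adEuler x y p q u = c • u) : adEuler x y p q (t * u) = (a + c) • (t * u) := by
  rw [adEuler_mul, ht, hu, smul_mul_assoc, mul_smul_comm, add_smul]

theorem adEuler_pow_eigen {t : A} {a : ℂ} (ht : adEuler x y p q t = a • t) (n : ℕ) :
    adEuler x y p q (t ^ n) = (n * a) • t ^ n := by
  induction n with
  | zero => simp [adEuler_apply]
  | succ n ih =>
    rw [pow_succ, adEuler_mul_eigen ih ht]
    push_cast
    ring_nf

theorem adEuler_weylMon (h : WeylRel x y p q) (i j k l : ℕ) :
    adEuler x y p q (weylMon x y p q i j k l) =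
      ((i : ℂ) + j - k - l) • weylMon x y p q i j k l := by
  have hx : adEuler x y p q x = (1 : ℂ) • x := by
    rw [adEuler_apply, add_mul, mul_add, mul_assoc x p, h.px, mul_assoc y q, h.qx,
      ← mul_assoc y x, ← h.xy, one_smul]
    noncomm_ring
  have hy : adEuler x y p q y = (1 : ℂ) • y := by
    rw [adEuler_apply, add_mul, mul_add, mul_assoc x p, h.py, mul_assoc y q, h.qy,
      ← mul_assoc x y, h.xy, one_smul]
    noncomm_ring
  have hp : adEuler x y p q p = (-1 : ℂ) • p := by
    rw [adEuler_apply, add_mul, mul_add, ← mul_assoc p x, h.px, ← mul_assoc p y, h.py,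
      mul_assoc y p q, h.pq]
    rw [neg_smul, one_smul]
    noncomm_ring
  have hq : adEuler x y p q q = (-1 : ℂ) • q := by
    rw [adEuler_apply, add_mul, mul_add, ← mul_assoc q x, h.qx, ← mul_assoc q y, h.qy,
      mul_assoc x q p, ← h.pq]
    rw [neg_smul, one_smul]
    noncomm_ring
  unfold weylMon
  rw [adEuler_mul_eigen (adEuler_mul_eigen (adEuler_mul_eigen (adEuler_pow_eigen hx i)
    (adEuler_pow_eigen hy j)) (adEuler_pow_eigen hp k)) (adEuler_pow_eigen hq l)]
  ring_nf

theorem span_weylMon_eq_top (h : WeylRel x y p q)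
    (htop : Algebra.adjoin ℂ {x, y, p, q} = ⊤) :
    Submodule.span ℂ {t | ∃ i j k l : ℕ, t = weylMon x y p q i j k l} = ⊤ := by
  set V := Submodule.span ℂ {t | ∃ i j k l : ℕ, t = weylMon x y p q i j k l} with hV
  have hmon : ∀ i j k l, weylMon x y p q i j k l ∈ V := fun i j k l =>
    Submodule.subset_span ⟨i, j, k, l, rfl⟩
  have hmul : ∀ r ∈ ({x, y, p, q} : Set A), ∀ t ∈ V, t * r ∈ V := by
    intro r hr
    have : V ≤ V.comap (LinearMap.mulRight ℂ r) := by
      rw [hV, Submodule.span_le]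
      rintro _ ⟨i, j, k, l, rfl⟩
      change weylMon x y p q i j k l * r ∈ V
      rcases hr with rfl | rfl | rfl | rfl
      · rw [weylMon_mul_x h]
        exact add_mem (hmon _ _ _ _) (V.smul_mem _ (hmon _ _ _ _))
      · rw [weylMon_mul_y h]
        exact add_mem (hmon _ _ _ _) (V.smul_mem _ (hmon _ _ _ _))
      · rw [weylMon_mul_p h]
        exact hmon _ _ _ _
      · rw [weylMon_mul_q]
        exact hmon _ _ _ _
    exact this
  rw [eq_top_iff, ← Algebra.top_toSubmodule, ← htop, Algebra.adjoin_eq_span, Submodule.span_le]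
  intro t ht
  induction ht using Submonoid.closure_induction_right with
  | one => simpa [weylMon_zero] using hmon 0 0 0 0
  | mul_right t _ r hr ih => exact hmul r hr _ ih

/-- The centralizer of the Euler operator is spanned by the monomials of weight zero. -/
theorem mem_of_adEuler_eq_zero (h : WeylRel x y p q)
    (htop : Algebra.adjoin ℂ {x, y, p, q} = ⊤) {J : Submodule ℂ A}
    (hJ : ∀ i j k l : ℕ, i + j = k + l → weylMon x y p q i j k l ∈ J)
    {t : A} (ht : adEuler x y p q t = 0) : t ∈ J := by
  set E := adEuler x y p q with hE
  have hle : (⊤ : Submodule ℂ A) ≤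
      (J ⊓ E.eigenspace 0) ⊔ ⨆ (c : ℂ) (_ : c ≠ 0), E.eigenspace c := by
    rw [← span_weylMon_eq_top h htop, Submodule.span_le]
    rintro _ ⟨i, j, k, l, rfl⟩
    have h1 : weylMon x y p q i j k l ∈ E.eigenspace ((i : ℂ) + j - k - l) :=
      Module.End.mem_eigenspace_iff.2 (adEuler_weylMon h i j k l)
    by_cases hc : (i : ℂ) + j - k - l = 0
    · rw [hc] at h1
      refine Submodule.mem_sup_left ⟨hJ i j k l ?_, h1⟩
      rw [sub_sub, sub_eq_zero] at hc
      exact_mod_cast hc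
    · exact Submodule.mem_sup_right
        (Submodule.mem_iSup_of_mem _ (Submodule.mem_iSup_of_mem hc h1))
  obtain ⟨u, hu, v, hv, rfl⟩ := Submodule.mem_sup.1 (hle (Submodule.mem_top (x := t)))
  have ht' : u + v ∈ E.eigenspace 0 := by
    rw [Module.End.mem_eigenspace_iff, ht, zero_smul]
  have hv' : v ∈ E.eigenspace 0 := by simpa using sub_mem ht' hu.2
  have := (Submodule.disjoint_def.1 (E.eigenspaces_iSupIndep 0)) v hv' hv
  simpa [this] using hu.1

end Weyl

theorem pderiv_pderiv_comm {σ R : Type*} [CommRing R] (i j : σ) (f : MvPolynomial σ R) :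
    pderiv i (pderiv j f) = pderiv j (pderiv i f) := by
  classical
  induction f using MvPolynomial.induction_on with
  | C a => simp
  | add f g hf hg => simp [hf, hg]
  | mul_X f k hf =>
    simp only [Derivation.leibniz, pderiv_X, Pi.single_apply, map_add, smul_eq_mul, hf]
    split_ifs <;> simp <;> ring

theorem weylRel_End : WeylRel Xop Yop Dxop Dyop where
  xy := LinearMap.ext fun f => by
    simp only [Xop, Yop, Module.End.mul_apply, LinearMap.mulLeft_apply]
    ring
  pq := LinearMap.ext fun f => pderiv_pderiv_comm 0 1 f
  px := LinearMap.ext fun f => by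
    simp [Xop, Dxop, Derivation.leibniz]
  qy := LinearMap.ext fun f => by
    simp [Yop, Dyop, Derivation.leibniz]
  py := LinearMap.ext fun f => by
    simp [Yop, Dxop, Derivation.leibniz, pderiv_X]
  qx := LinearMap.ext fun f => by
    simp [Xop, Dyop, Derivation.leibniz, pderiv_X]

theorem weylRel_A2 : WeylRel wX wY wDx wDy where
  xy := Subtype.ext weylRel_End.xy
  pq := Subtype.ext weylRel_End.pq
  px := Subtype.ext weylRel_End.px
  qy := Subtype.ext weylRel_End.qy
  py := Subtype.ext weylRel_End.py
  qx := Subtype.ext weylRel_End.qx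

theorem adjoin_A2_eq_top : Algebra.adjoin ℂ {wX, wY, wDx, wDy} = (⊤ : Subalgebra ℂ A2) := by
  have h : Algebra.adjoin ℂ ((fun t : A2 => t.1) ⁻¹' {Xop, Yop, Dxop, Dyop}) = ⊤ :=
    Algebra.adjoin_adjoin_coe_preimage
  rw [← h]
  congr 1
  ext t
  simp only [Set.mem_insert_iff, Set.mem_singleton_iff, Set.mem_preimage, Subtype.ext_iff,
    wX, wY, wDx, wDy]

theorem isMonicForm_mulForm (c : ℕ → ℂ) (j : ℕ) : IsMonicForm wX wY (mulForm c j) := by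
  unfold mulForm
  split_ifs
  · exact ⟨0, by simp⟩
  · exact ⟨c j, rfl⟩

theorem length_filter_range'_ne {m i : ℕ} (hi : i ∈ Finset.Icc 2 m) :
    ((List.range' 2 (m - 1)).filter (· ≠ i)).length = m - 2 := by
  have h : i ∈ List.range' 2 (m - 1) := by
    rw [Finset.mem_Icc] at hi
    rw [List.mem_range'_1]
    omega
  have h2 := List.length_erase_of_mem h
  rw [List.Nodup.erase_eq_filter List.nodup_range', List.length_range'] at h2
  rw [show m - 2 = m - 1 - 1 by omega, ← h2]
  congr 2
  ext k
  simp [bne, Bool.beq_eq_decide_eq]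

/-- normal form lemma: with `P = X∂x + Y∂y − |β|` and
`Q = (Π_{j=2}^m Aⱼ)∂y − Σ_{i=2}^m βᵢ Π_{j=2,j≠i}^m Aⱼ` (the `cⱼ`, `3 ≤ j ≤ m`, pairwise
distinct and nonzero), every `T ∈ A₂` commuting with the Euler operator `E = X∂x + Y∂y`
lies in `N₀ + A₂P + A₂Q`, where `N₀` is the span of the `(Y∂x)^k` (`k ≥ 1`), the
`(Y∂x)^k (Y∂y)^l` (`k, l ≥ 1`, `k + l ≤ m−2`) and the `(Y∂y)^l (X∂y)^k`
(`0 ≤ l ≤ m−2`, `k ≥ 0`). -/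
theorem stmt11 (m : ℕ) (hm : 2 ≤ m) (b : ℂ) (β : ℕ → ℂ) (c : ℕ → ℂ)
    (hc0 : ∀ j, 3 ≤ j → j ≤ m → c j ≠ 0)
    (hcne : ∀ j j', 3 ≤ j → j ≤ m → 3 ≤ j' → j' ≤ m → j ≠ j' → c j ≠ c j')
    (P Q : A2)
    (hP : P = wX * wDx + wY * wDy - algebraMap ℂ A2 b)
    (hQ : Q = ((List.range' 2 (m - 1)).map (mulForm c)).prod * wDy -
      ∑ i ∈ Finset.Icc 2 m, β i • (((List.range' 2 (m - 1)).filter (· ≠ i)).map (mulForm c)).prod)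
    (N₀ : Submodule ℂ A2)
    (hN₀ : N₀ = Submodule.span ℂ
      ({a : A2 | ∃ k : ℕ, 1 ≤ k ∧ a = (wY * wDx) ^ k} ∪
       {a : A2 | ∃ k l : ℕ, 1 ≤ k ∧ 1 ≤ l ∧ k + l ≤ m - 2 ∧
          a = (wY * wDx) ^ k * (wY * wDy) ^ l} ∪
       {a : A2 | ∃ l k : ℕ, l ≤ m - 2 ∧ a = (wY * wDy) ^ l * (wX * wDy) ^ k}))
    (T : A2) (hT : T * (wX * wDx + wY * wDy) = (wX * wDx + wY * wDy) * T) :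
    ∃ u ∈ N₀, ∃ v ∈ Ideal.span {P, Q}, T = u + v := by
  have h := weylRel_A2
  set I : Submodule ℂ A2 := (Ideal.span {P, Q}).restrictScalars ℂ with hI
  have hPI : ∀ t, t * P ∈ I := fun t =>
    (Ideal.span {P, Q}).mul_mem_left t (Ideal.subset_span (by simp))
  have hQI : ∀ t, t * Q ∈ I := fun t =>
    (Ideal.span {P, Q}).mul_mem_left t (Ideal.subset_span (by simp))
  have hforms : ∀ L : List ℕ, ∀ f ∈ L.map (mulForm c), IsMonicForm wX wY f := by
    intro L f hf
    obtain ⟨j, -, rfl⟩ := List.mem_map.1 hf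
    exact isMonicForm_mulForm c j
  have hN : ∀ {t}, t ∈ N₀ → t ∈ N₀ ⊔ I := fun ht => Submodule.mem_sup_left ht
  suffices hTJ : T ∈ N₀ ⊔ I by
    obtain ⟨u, hu, v, hv, huv⟩ := Submodule.mem_sup.1 hTJ
    exact ⟨u, hu, v, hv, huv.symm⟩
  refine mem_of_adEuler_eq_zero h adjoin_A2_eq_top (fun i j k l hw => ?_)
    (by rw [adEuler_apply, hT, sub_self])
  refine weylMon_mem_of_normalForms h hm (b := b) (hforms (List.range' 2 (m - 1))) (by simp)
    (R := ∑ i ∈ Finset.Icc 2 m,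
      β i • (((List.range' 2 (m - 1)).filter (· ≠ i)).map (mulForm c)).prod)
    ?_ (fun t => ?_) (fun t => ?_) (fun k hk => hN ?_) (fun k l hk hl hkl => hN ?_)
    (fun l k hl => hN ?_) _ _ hw rfl rfl
  · intro i j k l hijkl
    rw [Finset.mul_sum]
    refine sum_mem fun r hr => ?_
    rw [mul_smul_comm]
    refine Submodule.smul_mem _ _ ?_
    have h1 : weylMon wX wY wDx wDy i j k l ∈
        weylFil wX wY wDx wDy (-(m - 2 : ℕ)) (k + l) (j + k + 1) :=
      weylMon_mem_weylFil (by omega) (by omega)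
    have h2 := mul_prod_mem_weylFil h _
      (hforms ((List.range' 2 (m - 1)).filter (· ≠ r))) h1
    rw [List.length_map, length_filter_range'_ne hr, neg_add_cancel] at h2
    exact weylFil_mono (by omega) h2
  · rw [← hP]
    exact Submodule.mem_sup_right (hPI t)
  · rw [← hQ]
    exact Submodule.mem_sup_right (hQI t)
  · rw [hN₀]
    exact Submodule.subset_span (Or.inl (Or.inl ⟨k, hk, rfl⟩))
  · rw [hN₀]
    exact Submodule.subset_span (Or.inl (Or.inr ⟨k, l, hk, hl, hkl, rfl⟩))
  · rw [hN₀]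
    exact Submodule.subset_span (Or.inr ⟨l, k, hl, rfl⟩)
end

section
/- Let m ≥ 2, let c₃,…,c_m be pairwise distinct nonzero complex numbers, set α₂ = y and αⱼ = cⱼx + y for 3 ≤ j ≤ m, and let β̃ ∈ ℂ^m with β̃ᵢ ∉ ℤ for every i. In A₂ define P = X∂x + Y∂y − |β̃| (|β̃| = Σᵢβ̃ᵢ) and Q = (Π_{j=2}^m Aⱼ)∂y − Σ_{i=2}^m β̃ᵢ Π_{j=2, j≠i}^m Aⱼ, where Aⱼ is multiplication by αⱼ. Let I = A₂X + A₂P + A₂Q. Then I is a proper left ideal of A₂ if and only if −(m−2) ≤ |β̃| + 1 ≤ −1 (i.e. |β̃| is an integer in {−(m−1),…,−2}), and in that case I is a maximal left ideal of A₂ (so A₂/I is a nonzero simple A₂-module). -/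
set_option synthInstance.maxHeartbeats 1000000
set_option maxHeartbeats 1000000

open MvPolynomial

/-- The product of the factorials of the exponents of a monomial in two variables. -/
noncomputable def factorialWeight (e : Fin 2 →₀ ℕ) : ℂ := ∏ i, ((e i).factorial : ℂ)

theorem factorialWeight_ne_zero (e : Fin 2 →₀ ℕ) : factorialWeight e ≠ 0 :=
  Finset.prod_ne_zero_iff.2 fun _ _ => Nat.cast_ne_zero.2 (Nat.factorial_ne_zero _)

theorem factorialWeight_add_single (e : Fin 2 →₀ ℕ) (i : Fin 2) :
    factorialWeight (e + Finsupp.single i 1) = (e i + 1) * factorialWeight e := by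
  fin_cases i <;> simp [factorialWeight, Fin.prod_univ_two, Nat.factorial_succ] <;> ring

theorem factorialWeight_add_single_nat (e : Fin 2 →₀ ℕ) (i : Fin 2) (n : ℕ) :
    factorialWeight (e + Finsupp.single i n) =
      (∏ j ∈ Finset.range n, ((e i : ℂ) + (j + 1))) * factorialWeight e := by
  induction n with
  | zero => simp
  | succ n ih =>
    rw [Finsupp.single_add, ← add_assoc, factorialWeight_add_single, ih, Finset.prod_range_succ]
    simp only [Finsupp.add_apply, Finsupp.single_eq_same]
    push_cast
    ring

/-- An operator on `ℂ[x,y]` whose matrix entries in the basis of divided powers, along each fixed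
degree shift, are given by a polynomial in the exponents of the source monomial. -/
def HasPolynomialEntries (a : Module.End ℂ (MvPolynomial (Fin 2) ℂ)) : Prop :=
  ∀ d : Fin 2 → ℤ, ∃ r : MvPolynomial (Fin 2) ℂ, ∀ e e' : Fin 2 →₀ ℕ,
    (∀ i, (e' i : ℤ) = e i + d i) →
      factorialWeight e' * coeff e' (a (monomial e 1)) =
        factorialWeight e * eval (fun i => (e i : ℂ)) r

namespace HasPolynomialEntries

variable {a b : Module.End ℂ (MvPolynomial (Fin 2) ℂ)}

theorem one : HasPolynomialEntries 1 := by
  intro d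
  by_cases hd : d = 0
  · refine ⟨1, fun e e' h => ?_⟩
    obtain rfl : e' = e := Finsupp.ext fun i => by simpa [hd] using h i
    simp
  · refine ⟨0, fun e e' h => ?_⟩
    have : e ≠ e' := by
      rintro rfl
      exact hd (funext fun i => by simpa using h i)
    simp [coeff_monomial, this]

theorem add (ha : HasPolynomialEntries a) (hb : HasPolynomialEntries b) :
    HasPolynomialEntries (a + b) := by
  intro d
  obtain ⟨r, hr⟩ := ha d
  obtain ⟨s, hs⟩ := hb d
  refine ⟨r + s, fun e e' h => ?_⟩
  simp only [LinearMap.add_apply, coeff_add, map_add, mul_add, hr e e' h, hs e e' h]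

theorem algebraMap_mul (z : ℂ) (ha : HasPolynomialEntries a) :
    HasPolynomialEntries (algebraMap ℂ _ z * a) := by
  intro d
  obtain ⟨r, hr⟩ := ha d
  refine ⟨C z * r, fun e e' h => ?_⟩
  simp only [Module.End.mul_apply, Module.algebraMap_end_apply, coeff_smul, smul_eq_mul, map_mul,
    eval_C]
  linear_combination z * hr e e' h

theorem mulLeft_X_mul (i : Fin 2) (ha : HasPolynomialEntries a) :
    HasPolynomialEntries (LinearMap.mulLeft ℂ (X i) * a) := by
  intro d
  obtain ⟨r, hr⟩ := ha (d - Pi.single i 1)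
  refine ⟨(X i + C (d i : ℂ)) * r, fun e e' h => ?_⟩
  have hi : (e i : ℂ) + d i = e' i := by exact_mod_cast (h i).symm
  simp only [Module.End.mul_apply, LinearMap.mulLeft_apply, map_mul, map_add, eval_X, eval_C, hi]
  rw [coeff_X_mul']
  by_cases h0 : e' i = 0
  · simp [h0]
  · obtain ⟨f, rfl⟩ : ∃ f, e' = f + Finsupp.single i 1 :=
      ⟨e' - Finsupp.single i 1, (tsub_add_cancel_of_le (by simp; omega)).symm⟩
    have hf := hr e f fun j => by
      have := h j
      simp only [Finsupp.add_apply, Pi.sub_apply] at this ⊢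
      by_cases hj : j = i
      · subst hj; simp at this ⊢; omega
      · simp [hj] at this ⊢; omega
    rw [if_pos (by simp), add_tsub_cancel_right, factorialWeight_add_single]
    simp only [Finsupp.add_apply, Finsupp.single_eq_same]
    push_cast
    linear_combination ((f i : ℂ) + 1) * hf

theorem pderiv_mul (i : Fin 2) (ha : HasPolynomialEntries a) :
    HasPolynomialEntries ((pderiv i : Derivation ℂ (MvPolynomial (Fin 2) ℂ)
      (MvPolynomial (Fin 2) ℂ)).toLinearMap * a) := by
  intro d
  obtain ⟨r, hr⟩ := ha (d + Pi.single i 1)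
  refine ⟨r, fun e e' h => ?_⟩
  have hf := hr e (e' + Finsupp.single i 1) fun j => by
    have := h j
    simp only [Finsupp.add_apply, Pi.add_apply]
    by_cases hj : j = i
    · subst hj; simp; omega
    · simp [hj]; omega
  rw [factorialWeight_add_single] at hf
  simp only [Module.End.mul_apply, Derivation.coeFn_coe, coeff_pderiv]
  linear_combination hf

theorem of_mem_A2 (ha : a ∈ A2) : HasPolynomialEntries a := by
  suffices ∀ b, HasPolynomialEntries b → HasPolynomialEntries (a * b) by
    simpa using this 1 one
  refine Algebra.adjoin_induction (p := fun a _ => ∀ b, HasPolynomialEntries b →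
    HasPolynomialEntries (a * b)) ?_ ?_ ?_ ?_ ha
  · rintro _ (rfl | rfl | rfl | rfl) b hb
    exacts [hb.mulLeft_X_mul 0, hb.mulLeft_X_mul 1, hb.pderiv_mul 0, hb.pderiv_mul 1]
  · exact fun z b hb => hb.algebraMap_mul z
  · intro u v _ _ hu hv b hb
    rw [add_mul]
    exact (hu b hb).add (hv b hb)
  · intro u v _ _ hu hv b hb
    rw [mul_assoc]
    exact hu _ (hv b hb)

/-- The matrix entries are also polynomial in the exponents of the target monomial. -/
theorem exists_target (ha : HasPolynomialEntries a) (i : Fin 2) (n : ℕ) :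
    ∃ r : MvPolynomial (Fin 2) ℂ, ∀ e : Fin 2 →₀ ℕ,
      coeff e (a (monomial (e + Finsupp.single i n) 1)) =
        (∏ j ∈ Finset.range n, ((e i : ℂ) + (j + 1))) * eval (fun i => (e i : ℂ)) r := by
  obtain ⟨r, hr⟩ := ha (-Pi.single i (n : ℤ))
  refine ⟨bind₁ (fun j => X j + C ((Finsupp.single i n j : ℕ) : ℂ)) r, fun e => ?_⟩
  have h := hr (e + Finsupp.single i n) e fun j => by
    by_cases hj : j = i
    · subst hj; simp
    · simp [hj]
  rw [factorialWeight_add_single_nat] at h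
  apply mul_left_cancel₀ (factorialWeight_ne_zero e)
  rw [h]
  have : eval (fun i => (e i : ℂ)) (bind₁ (fun j => X j + C ((Finsupp.single i n j : ℕ) : ℂ)) r) =
      eval (fun j => ((e + Finsupp.single i n) j : ℂ)) r := by
    rw [eval, eval₂Hom_bind₁]
    congr 2
    ext j
    simp
  rw [this]
  ring

end HasPolynomialEntries

theorem Yop_pow_monomial (n : ℕ) (e : Fin 2 →₀ ℕ) :
    (Yop ^ n) (monomial e 1) = monomial (e + Finsupp.single 1 n) 1 := by
  rw [Yop, LinearMap.pow_mulLeft, LinearMap.mulLeft_apply, X_pow_eq_monomial, monomial_mul, one_mul,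
    add_comm]

theorem span_euler_ne_top {n k : ℕ} (hk : k < n) :
    Ideal.span {wX, wY * wDy - algebraMap ℂ A2 (-(k + 1)), wY ^ n} ≠ ⊤ := by
  intro h
  have h1 : (1 : A2) ∈ Ideal.span {wX, wY * wDy - algebraMap ℂ A2 (-(k + 1)), wY ^ n} :=
    h ▸ Submodule.mem_top
  obtain ⟨a, b, c, habc⟩ := Submodule.mem_span_triple.1 h1
  obtain ⟨ra, hra⟩ := (HasPolynomialEntries.of_mem_A2 a.2).exists_target 0 1
  obtain ⟨rb, hrb⟩ := (HasPolynomialEntries.of_mem_A2 b.2).exists_target 1 0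
  obtain ⟨rc, hrc⟩ := (HasPolynomialEntries.of_mem_A2 c.2).exists_target 1 n
  have habc' : (a : Module.End ℂ (MvPolynomial (Fin 2) ℂ)) * Xop +
      b * (Yop * Dyop - algebraMap ℂ _ (-((k : ℂ) + 1))) + c * Yop ^ n = 1 :=
    congrArg Subtype.val habc
  have key : (X 0 + 1) * ra + (X 1 + C ((k : ℂ) + 1)) * rb +
      (∏ j ∈ Finset.range n, (X 1 + C ((j : ℂ) + 1))) * rc = 1 := by
    refine funext_set (fun _ => Set.range ((↑) : ℕ → ℂ))
      (fun _ => Set.infinite_range_of_injective Nat.cast_injective) fun x hx => ?_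
    choose f hf using fun i => hx i trivial
    let e : Fin 2 →₀ ℕ := Finsupp.equivFunOnFinite.symm f
    obtain rfl : x = fun i => (e i : ℂ) := funext fun i => (hf i).symm
    have hX : Xop (monomial e 1) = monomial (e + Finsupp.single 0 1) 1 := by
      rw [Xop, LinearMap.mulLeft_apply, X, monomial_mul, one_mul, add_comm]
    have hE : (Yop * Dyop - algebraMap ℂ (Module.End ℂ (MvPolynomial (Fin 2) ℂ)) (-((k : ℂ) + 1)))
        (monomial e 1) =
        ((e 1 : ℂ) + (k + 1)) • monomial e (1 : ℂ) := by
      have : Yop (Dyop (monomial e 1)) = (e 1 : ℂ) • monomial e (1 : ℂ) := by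
        simp only [Yop, Dyop, LinearMap.mulLeft_apply, Derivation.coeFn_coe]
        rw [X_mul_pderiv_monomial, Nat.cast_smul_eq_nsmul]
      rw [LinearMap.sub_apply, Module.End.mul_apply, this, Module.algebraMap_end_apply, ← sub_smul]
      congr 1
      ring
    have := congrArg (fun T : Module.End ℂ _ => coeff e (T (monomial e 1))) habc'
    simp only [LinearMap.add_apply, Module.End.mul_apply, hX, hE, Yop_pow_monomial, coeff_add,
      map_smul, coeff_smul, hra, hrc, Module.End.one_apply, coeff_monomial, if_true] at this
    have hb := hrb e
    simp only [Finsupp.single_zero, add_zero] at hb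
    rw [hb] at this
    simpa [eval_prod] using this
  have := congrArg (eval ![(-1 : ℂ), -(k + 1)]) key
  simp at this
  rw [Finset.prod_eq_zero (Finset.mem_range.2 hk) (by ring)] at this
  simp at this

/-- Generators `x, y, p, q` of a ring satisfy the defining relations of the Weyl algebra, with `p`
and `q` playing the roles of `∂x` and `∂y`. -/
structure WeylRelations {R : Type*} [Ring R] (x y p q : R) : Prop where
  xy : x * y = y * x
  px : p * x = x * p + 1
  qx : q * x = x * q
  py : p * y = y * p
  qy : q * y = y * q + 1
  pq : p * q = q * p

namespace WeylRelations

variable {R : Type*} [Ring R] {x y p q : R}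

theorem mul_pow_succ (h : WeylRelations x y p q) (j : ℕ) :
    q * y ^ (j + 1) = y ^ j * (y * q) + (j + 1) * y ^ j := by
  induction j with
  | zero => simp [h.qy]
  | succ j ih =>
    have hc : ((j : R) + 1) * y ^ j * y = y ^ (j + 1) * ((j : R) + 1) := by
      rw [mul_assoc, ← pow_succ]
      exact_mod_cast (Nat.cast_commute (j + 1) (y ^ (j + 1))).eq
    have hc' : ((j : R) + 1) * y ^ (j + 1) = y ^ (j + 1) * ((j : R) + 1) := by
      exact_mod_cast (Nat.cast_commute (j + 1) (y ^ (j + 1))).eq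
    rw [pow_succ y (j + 1), ← mul_assoc, ih, add_mul, mul_assoc _ _ y, mul_assoc y q y, h.qy, hc]
    push_cast
    rw [add_mul _ 1, hc', pow_succ y j]
    noncomm_ring

theorem pow_succ_mul_sub_eq (h : WeylRelations x y p q) (n : ℕ) (a b t : R) :
    (y ^ (n + 1) + a * x) * q - (y ^ n * t + b * x) =
      y ^ n * (y * q - t) + (a * q - b) * x := by
  rw [sub_mul, mul_assoc a q x, h.qx, pow_succ]
  noncomm_ring

variable [Algebra ℂ R]

/-- If `y∂y - μ` and `yⁿ` lie in a left ideal, so does `yᵏ` for `k ≤ n`, unless `-μ` is one of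
`k + 1, …, n`. -/
theorem pow_mem_of_pow_mem (h : WeylRelations x y p q) {J : Ideal R} {μ : ℂ}
    (hE : y * q - algebraMap ℂ R μ ∈ J) {n k : ℕ} (hkn : k ≤ n) (hn : y ^ n ∈ J)
    (hμ : ∀ j, k ≤ j → j < n → μ ≠ -(j + 1)) : y ^ k ∈ J := by
  induction n, hkn using Nat.le_induction with
  | base => exact hn
  | succ n hkn ih =>
    refine ih ?_ fun j hj hjn => hμ j hj (by omega)
    have hne : μ + (n + 1) ≠ 0 := fun h0 => hμ n hkn (by omega) (eq_neg_of_add_eq_zero_left h0)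
    have hmem : (μ + (n + 1)) • y ^ n ∈ J := by
      have : (μ + (n + 1)) • y ^ n =
          q * y ^ (n + 1) - y ^ n * (y * q - algebraMap ℂ R μ) := by
        rw [h.mul_pow_succ, mul_sub, ← Algebra.commutes, Algebra.smul_def]
        simp only [map_add, map_natCast, map_one]
        noncomm_ring
      rw [this]
      exact J.sub_mem (J.mul_mem_left _ hn) (J.mul_mem_left _ hE)
    have := J.mul_mem_left (algebraMap ℂ R (μ + (n + 1))⁻¹) hmem
    rwa [← Algebra.smul_def, smul_smul, inv_mul_cancel₀ hne, one_smul] at this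

/-- Reduction of the generators modulo the left ideal generated by `x`. -/
theorem span_eq (h : WeylRelations x y p q) (s b : ℂ) (hb : b ≠ -1) (n : ℕ) (a : R) :
    Ideal.span {x, x * p + y * q - algebraMap ℂ R s,
      y ^ n * (y * q - algebraMap ℂ R (s - b)) + a * x} =
    Ideal.span {x, y * q - algebraMap ℂ R (s + 1), y ^ n} := by
  have e1 : x * p + y * q - algebraMap ℂ R s = p * x + (y * q - algebraMap ℂ R (s + 1)) := by
    rw [h.px, map_add, map_one]; noncomm_ring
  have e2 : y ^ n * (y * q - algebraMap ℂ R (s - b)) =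
      y ^ n * (y * q - algebraMap ℂ R (s + 1)) + algebraMap ℂ R (b + 1) * y ^ n := by
    rw [Algebra.commutes, ← mul_add]
    congr 1
    simp only [map_add, map_sub, map_one]
    noncomm_ring
  rw [e1, e2]
  have hb1 : b + 1 ≠ 0 := fun h0 => hb (eq_neg_of_add_eq_zero_left h0)
  apply le_antisymm <;> rw [Ideal.span_le]
  · set J := Ideal.span {x, y * q - algebraMap ℂ R (s + 1), y ^ n}
    have hx : x ∈ J := Ideal.subset_span (by simp)
    have hE : y * q - algebraMap ℂ R (s + 1) ∈ J := Ideal.subset_span (by simp)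
    have hy : y ^ n ∈ J := Ideal.subset_span (by simp)
    rintro _ (rfl | rfl | rfl)
    · exact hx
    · exact J.add_mem (J.mul_mem_left _ hx) hE
    · exact J.add_mem (J.add_mem (J.mul_mem_left _ hE) (J.mul_mem_left _ hy)) (J.mul_mem_left _ hx)
  · set J := Ideal.span {x, p * x + (y * q - algebraMap ℂ R (s + 1)),
      y ^ n * (y * q - algebraMap ℂ R (s + 1)) + algebraMap ℂ R (b + 1) * y ^ n + a * x}
    have hx : x ∈ J := Ideal.subset_span (by simp)
    have hE : y * q - algebraMap ℂ R (s + 1) ∈ J :=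
      (J.add_mem_iff_right (J.mul_mem_left p hx)).1 (Ideal.subset_span (by simp))
    have hy : algebraMap ℂ R (b + 1) * y ^ n ∈ J :=
      (J.add_mem_iff_right (J.mul_mem_left (y ^ n) hE)).1
        ((J.add_mem_iff_left (J.mul_mem_left a hx)).1 (Ideal.subset_span (by simp)))
    rintro _ (rfl | rfl | rfl)
    · exact hx
    · exact hE
    · have := J.mul_mem_left (algebraMap ℂ R (b + 1)⁻¹) hy
      rwa [← mul_assoc, ← map_mul, inv_mul_cancel₀ hb1, map_one, one_mul] at this

/-- Substitution of commuting elements `p, q` for the variables of a polynomial. -/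
noncomputable def subst (p q : R) : MvPolynomial (Fin 2) ℂ →ₗ[ℂ] R :=
  (basisMonomials (Fin 2) ℂ).constr ℂ fun e => p ^ e 0 * q ^ e 1

theorem subst_monomial (e : Fin 2 →₀ ℕ) (z : ℂ) :
    subst p q (monomial e z) = z • (p ^ e 0 * q ^ e 1) := by
  have : monomial e z = z • basisMonomials (Fin 2) ℂ e := by simp [smul_monomial]
  rw [this, map_smul, subst, Module.Basis.constr_basis]

theorem subst_C (z : ℂ) : subst p q (C z) = algebraMap ℂ R z := by
  rw [C_apply, subst_monomial, Algebra.algebraMap_eq_smul_one]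
  simp

theorem subst_X_zero_mul (f : MvPolynomial (Fin 2) ℂ) :
    subst p q (X 0 * f) = p * subst p q f := by
  induction f using MvPolynomial.induction_on' with
  | monomial e z =>
    rw [X, monomial_mul, subst_monomial, subst_monomial]
    simp [add_comm 1, pow_succ', mul_assoc]
  | add f g hf hg => rw [mul_add, map_add, hf, hg, map_add, mul_add]

theorem subst_X_one_mul (h : WeylRelations x y p q) (f : MvPolynomial (Fin 2) ℂ) :
    subst p q (X 1 * f) = q * subst p q f := by
  induction f using MvPolynomial.induction_on' with
  | monomial e z =>
    have : q * p ^ e 0 = p ^ e 0 * q := (Commute.pow_right (show Commute q p from h.pq.symm) _).eq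
    rw [X, monomial_mul, subst_monomial, subst_monomial, mul_smul_comm, ← mul_assoc q, this]
    simp [add_comm 1, pow_succ', mul_assoc]
  | add f g hf hg => rw [mul_add, map_add, hf, hg, map_add, mul_add]

theorem x_mul_subst (h : WeylRelations x y p q) (f : MvPolynomial (Fin 2) ℂ) :
    x * subst p q f = subst p q f * x - subst p q (pderiv 0 f) := by
  induction f using MvPolynomial.induction_on with
  | C z => simp [subst_C, Algebra.commutes]
  | add f g hf hg => simp only [map_add, mul_add, add_mul, hf, hg]; abel
  | mul_X f i hf =>
    have hxp : x * p = p * x - 1 := by rw [h.px]; simp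
    rw [mul_comm f, MvPolynomial.pderiv_mul]
    fin_cases i
    · simp only [Fin.zero_eta, pderiv_X_self, one_mul, map_add, subst_X_zero_mul]
      rw [← mul_assoc, hxp, sub_mul, mul_assoc, hf]
      noncomm_ring
    · simp only [Fin.mk_one, ne_eq, one_ne_zero, not_false_eq_true, pderiv_X_of_ne, zero_mul,
        zero_add, h.subst_X_one_mul]
      rw [← mul_assoc, ← h.qx, mul_assoc, hf]
      noncomm_ring

theorem y_mul_subst (h : WeylRelations x y p q) (f : MvPolynomial (Fin 2) ℂ) :
    y * subst p q f = subst p q f * y - subst p q (pderiv 1 f) := by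
  induction f using MvPolynomial.induction_on with
  | C z => simp [subst_C, Algebra.commutes]
  | add f g hf hg => simp only [map_add, mul_add, add_mul, hf, hg]; abel
  | mul_X f i hf =>
    have hyq : y * q = q * y - 1 := by rw [h.qy]; simp
    rw [mul_comm f, MvPolynomial.pderiv_mul]
    fin_cases i
    · simp only [Fin.zero_eta, ne_eq, zero_ne_one, not_false_eq_true, pderiv_X_of_ne, zero_mul,
        zero_add, subst_X_zero_mul]
      rw [← mul_assoc, ← h.py, mul_assoc, hf]
      noncomm_ring
    · simp only [Fin.mk_one, pderiv_X_self, one_mul, map_add, h.subst_X_one_mul]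
      rw [← mul_assoc, hyq, sub_mul, mul_assoc, hf]
      noncomm_ring

/-- If `x` and `y` annihilate `v` modulo the left ideal `I`, then every left ideal above `I` that
contains a nonzero polynomial in `p, q` times `v` contains `v`. -/
theorem mem_of_subst_mul_mem (h : WeylRelations x y p q) {I J : Ideal R} (hIJ : I ≤ J) {v : R}
    (hx : x * v ∈ I) (hy : y * v ∈ I) (f : MvPolynomial (Fin 2) ℂ) (hf0 : f ≠ 0)
    (hf : subst p q f * v ∈ J) : v ∈ J := by
  obtain ⟨n, hn⟩ : ∃ n, ∀ e, coeff e f ≠ 0 → e 0 + e 1 < n :=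
    ⟨f.support.sup (fun e => e 0 + e 1) + 1, fun e he => Nat.lt_succ_of_le
      (Finset.le_sup (f := fun e : Fin 2 →₀ ℕ => e 0 + e 1) (mem_support_iff.2 he))⟩
  induction n generalizing f with
  | zero =>
    exact (hf0 (MvPolynomial.ext _ _ fun e => by_contra fun he => by simpa using hn e he)).elim
  | succ n ih =>
    have hbound (i : Fin 2) (e : Fin 2 →₀ ℕ) (he : coeff e (pderiv i f) ≠ 0) : e 0 + e 1 < n := by
      rw [coeff_pderiv] at he
      have := hn _ (left_ne_zero_of_mul he)
      fin_cases i <;> simp at this <;> omega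
    by_cases h0 : pderiv 0 f = 0
    · by_cases h1 : pderiv 1 f = 0
      · have hfC : f = C (coeff 0 f) := by
          ext e
          rw [coeff_C]
          split_ifs with he
          · rw [he]
          · obtain ⟨i, hi⟩ : ∃ i, e i ≠ 0 := by
              by_contra! hall
              exact he (Finsupp.ext fun i => (hall i).symm)
            have hd : pderiv i f = 0 := by fin_cases i <;> assumption
            have hc := congrArg (coeff (e - Finsupp.single i 1)) hd
            rw [coeff_pderiv, tsub_add_cancel_of_le (by simp; omega), coeff_zero] at hc
            exact (mul_eq_zero.1 hc).resolve_right (Nat.cast_add_one_ne_zero _)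
        have hz : coeff 0 f ≠ 0 := fun hz => hf0 (by rw [hfC, hz, C_0])
        rw [hfC, subst_C] at hf
        have := J.mul_mem_left (algebraMap ℂ R (coeff 0 f)⁻¹) hf
        rwa [← mul_assoc, ← map_mul, inv_mul_cancel₀ hz, map_one, one_mul] at this
      · refine ih _ h1 ?_ (hbound 1)
        have : subst p q (pderiv 1 f) * v = subst p q f * (y * v) - y * (subst p q f * v) := by
          rw [← mul_assoc y, h.y_mul_subst]; noncomm_ring
        rw [this]
        exact J.sub_mem (J.mul_mem_left _ (hIJ hy)) (J.mul_mem_left _ hf)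
    · refine ih _ h0 ?_ (hbound 0)
      have : subst p q (pderiv 0 f) * v = subst p q f * (x * v) - x * (subst p q f * v) := by
        rw [← mul_assoc x, h.x_mul_subst]; noncomm_ring
      rw [this]
      exact J.sub_mem (J.mul_mem_left _ (hIJ hx)) (J.mul_mem_left _ hf)

/-- If `x` and `y` annihilate `v` modulo `I`, the elements congruent modulo `I` to a polynomial in
`p, q` times `v` form a left ideal. -/
noncomputable def substIdeal (h : WeylRelations x y p q)
    (hgen : Algebra.adjoin ℂ {x, y, p, q} = ⊤) (I : Ideal R) (v : R)
    (hx : x * v ∈ I) (hy : y * v ∈ I) : Ideal R where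
  carrier := {a | ∃ f, a - subst p q f * v ∈ I}
  zero_mem' := ⟨0, by simp⟩
  add_mem' := by
    rintro a b ⟨f, hf⟩ ⟨g, hg⟩
    refine ⟨f + g, ?_⟩
    convert I.add_mem hf hg using 1
    rw [map_add]
    noncomm_ring
  smul_mem' := by
    intro r
    have hr : r ∈ Algebra.adjoin ℂ {x, y, p, q} := hgen ▸ Algebra.mem_top
    induction hr using Algebra.adjoin_induction with
    | mem r hr =>
      rintro a ⟨f, hf⟩
      obtain rfl | rfl | rfl | rfl := hr
      · refine ⟨-pderiv 0 f, ?_⟩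
        convert I.add_mem (I.mul_mem_left r hf) (I.mul_mem_left (subst p q f) hx) using 1
        rw [mul_sub, ← mul_assoc r (subst p q f), h.x_mul_subst, map_neg, smul_eq_mul]
        noncomm_ring
      · refine ⟨-pderiv 1 f, ?_⟩
        convert I.add_mem (I.mul_mem_left r hf) (I.mul_mem_left (subst p q f) hy) using 1
        rw [mul_sub, ← mul_assoc r (subst p q f), h.y_mul_subst, map_neg, smul_eq_mul]
        noncomm_ring
      · refine ⟨X 0 * f, ?_⟩
        rw [subst_X_zero_mul, mul_assoc, smul_eq_mul, ← mul_sub]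
        exact I.mul_mem_left _ hf
      · refine ⟨X 1 * f, ?_⟩
        rw [h.subst_X_one_mul, mul_assoc, smul_eq_mul, ← mul_sub]
        exact I.mul_mem_left _ hf
    | algebraMap z =>
      rintro a ⟨f, hf⟩
      refine ⟨z • f, ?_⟩
      rw [map_smul, Algebra.smul_def, mul_assoc, smul_eq_mul, ← mul_sub]
      exact I.mul_mem_left _ hf
    | add r s _ _ hr hs =>
      intro a ha
      obtain ⟨f, hf⟩ := hr ha
      obtain ⟨g, hg⟩ := hs ha
      refine ⟨f + g, ?_⟩
      convert I.add_mem hf hg using 1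
      rw [map_add, add_smul]
      noncomm_ring
    | mul r s _ _ hr hs =>
      intro a ha
      rw [mul_smul]
      exact hr (hs ha)

/-- A proper left ideal `I` is maximal if modulo `I` the ring is generated by a vector `v`
annihilated by `x` and `y`. -/
theorem isMaximal (h : WeylRelations x y p q) (hgen : Algebra.adjoin ℂ {x, y, p, q} = ⊤)
    {I : Ideal R} (hI : I ≠ ⊤) {v : R} (hx : x * v ∈ I) (hy : y * v ∈ I)
    (hv : ∀ J : Ideal R, I ≤ J → v ∈ J → J = ⊤) : I.IsMaximal := by
  refine ⟨hI, fun J hJ => hv J hJ.le ?_⟩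
  obtain ⟨a, haJ, haI⟩ := SetLike.exists_of_lt hJ
  have htop := hv (h.substIdeal hgen I v hx hy) (fun b hb => ⟨0, by simpa using hb⟩)
    ⟨1, by rw [← C_1, subst_C]; simp⟩
  obtain ⟨f, hf⟩ : a ∈ h.substIdeal hgen I v hx hy := htop ▸ Submodule.mem_top
  have hfJ : subst p q f * v ∈ J := by
    have := J.sub_mem haJ (hJ.le hf)
    rwa [sub_sub_cancel] at this
  refine h.mem_of_subst_mul_mem hJ.le hx hy f ?_ hfJ
  rintro rfl
  exact haI (by simpa using hf)

/-- The left ideal generated by `x`, `y∂y + k + 1` and `yⁿ`, with `k < n`, is maximal as soon as it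
is proper. -/
theorem isMaximal_span (h : WeylRelations x y p q) (hgen : Algebra.adjoin ℂ {x, y, p, q} = ⊤)
    {n k : ℕ} (hk : k < n)
    (hI : Ideal.span {x, y * q - algebraMap ℂ R (-(k + 1)), y ^ n} ≠ ⊤) :
    (Ideal.span {x, y * q - algebraMap ℂ R (-(k + 1)), y ^ n}).IsMaximal := by
  set I := Ideal.span {x, y * q - algebraMap ℂ R (-(k + 1)), y ^ n}
  have hxI : x ∈ I := Ideal.subset_span (by simp)
  have hE : y * q - algebraMap ℂ R (-(k + 1)) ∈ I := Ideal.subset_span (by simp)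
  have hyn : y ^ n ∈ I := Ideal.subset_span (by simp)
  refine h.isMaximal hgen hI (v := y ^ k) ?_ ?_ fun J hIJ hJ => ?_
  · rw [(show Commute x y from h.xy).pow_right k |>.eq]
    exact I.mul_mem_left _ hxI
  · rw [← pow_succ']
    refine h.pow_mem_of_pow_mem hE hk hyn fun j hj _ heq => ?_
    have : k = j := by exact_mod_cast add_right_cancel (neg_injective heq)
    omega
  · rw [Ideal.eq_top_iff_one, ← pow_zero y]
    refine h.pow_mem_of_pow_mem (hIJ hE) (Nat.zero_le k) hJ fun j _ hj heq => ?_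
    have : k = j := by exact_mod_cast add_right_cancel (neg_injective heq)
    omega

end WeylRelations

theorem weylRelations_A2 : WeylRelations wX wY wDx wDy where
  xy := Subtype.ext <| LinearMap.ext fun f => by
    simp [wX, wY, Xop, Yop, mul_left_comm]
  px := Subtype.ext <| LinearMap.ext fun f => by
    simp [wX, wDx, Xop, Dxop, mul_comm, add_comm]
  qx := Subtype.ext <| LinearMap.ext fun f => by
    simp [wX, wDy, Xop, Dyop]
  py := Subtype.ext <| LinearMap.ext fun f => by
    simp [wY, wDx, Yop, Dxop]
  qy := Subtype.ext <| LinearMap.ext fun f => by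
    simp [wY, wDy, Yop, Dyop, mul_comm, add_comm]
  pq := Subtype.ext <| LinearMap.ext fun f => by
    simp only [wDx, wDy, Dxop, Dyop, MulMemClass.mk_mul_mk, Module.End.mul_apply,
      Derivation.coeFn_coe]
    ext e
    simp only [coeff_pderiv, Finsupp.add_apply, add_right_comm e]
    simp
    ring

theorem adjoin_generators_eq_top : Algebra.adjoin ℂ {wX, wY, wDx, wDy} = ⊤ := by
  have : ((↑) : A2 → Module.End ℂ (MvPolynomial (Fin 2) ℂ)) ⁻¹' {Xop, Yop, Dxop, Dyop} =
      {wX, wY, wDx, wDy} := by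
    ext a
    simp [Subtype.ext_iff, wX, wY, wDx, wDy]
  rw [← this]
  exact Algebra.adjoin_adjoin_coe_preimage

/-- A product of linear forms `cⱼx + y` is a power of `y` modulo the left ideal generated by `x`. -/
theorem exists_prod_mulForm_eq (c : ℕ → ℂ) (l : List ℕ) :
    ∃ a, (l.map (mulForm c)).prod = wY ^ l.length + a * wX := by
  induction l with
  | nil => exact ⟨0, by simp⟩
  | cons j l ih =>
    obtain ⟨a, ha⟩ := ih
    obtain ⟨z, hz⟩ : ∃ z : ℂ, mulForm c j = z • wX + wY := by
      by_cases hj : j = 2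
      · exact ⟨0, by simp [mulForm, hj]⟩
      · exact ⟨c j, by simp [mulForm, hj]⟩
    refine ⟨z • wY ^ l.length + (z • wX + wY) * a, ?_⟩
    have hc : wX * wY ^ l.length = wY ^ l.length * wX :=
      (show Commute wX wY from weylRelations_A2.xy).pow_right _ |>.eq
    rw [List.map_cons, List.prod_cons, ha, hz, List.length_cons, pow_succ', mul_add, add_mul,
      smul_mul_assoc, hc, add_mul _ _ wX, smul_mul_assoc, mul_assoc _ a]
    abel

theorem length_filter_range' {n i : ℕ} (hi : i ∈ Finset.Icc 2 (n + 2)) :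
    ((List.range' 2 (n + 1)).filter (· ≠ i)).length = n := by
  have hmem : i ∈ List.range' 2 (n + 1) := by
    simp only [Finset.mem_Icc] at hi
    simp only [List.mem_range'_1]
    omega
  have := List.length_erase_of_mem hmem
  rw [(List.nodup_range' 1).erase_eq_filter, List.length_range'] at this
  rw [Nat.add_sub_cancel] at this
  refine Eq.trans ?_ this
  congr 2
  funext j
  by_cases hj : j = i <;> simp [hj]

/-- with `α₂ = y`, `αⱼ = cⱼx + y` (`3 ≤ j ≤ m`, the `cⱼ` pairwise distinct and
nonzero), `β̃ ∈ ℂ^m` with no `β̃ᵢ` an integer, `P = X∂x + Y∂y − |β̃|` and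
`Q = (Π_{j=2}^m Aⱼ)∂y − Σ_{i=2}^m β̃ᵢ Π_{j=2,j≠i}^m Aⱼ`, the left ideal
`I = A₂X + A₂P + A₂Q` is proper iff `−(m−2) ≤ |β̃|+1 ≤ −1` (as an integer), and in that case
it is a maximal left ideal (so `A₂/I` is a nonzero simple `A₂`-module). -/
theorem stmt16 (m : ℕ) (hm : 2 ≤ m) (c : ℕ → ℂ)
    (hc0 : ∀ j, 3 ≤ j → j ≤ m → c j ≠ 0)
    (hcne : ∀ j j', 3 ≤ j → j ≤ m → 3 ≤ j' → j' ≤ m → j ≠ j' → c j ≠ c j')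
    (tβ : ℕ → ℂ) (htβ : ∀ i, 1 ≤ i → i ≤ m → ∀ z : ℤ, tβ i ≠ z)
    (P Q : A2)
    (hP : P = wX * wDx + wY * wDy - algebraMap ℂ A2 (∑ i ∈ Finset.Icc 1 m, tβ i))
    (hQ : Q = ((List.range' 2 (m - 1)).map (mulForm c)).prod * wDy -
      ∑ i ∈ Finset.Icc 2 m, tβ i • (((List.range' 2 (m - 1)).filter (· ≠ i)).map (mulForm c)).prod)
    (I : Ideal A2) (hI : I = Ideal.span {wX, P, Q}) :
    (I ≠ ⊤ ↔ ∃ z : ℤ, (∑ i ∈ Finset.Icc 1 m, tβ i) = (z : ℂ) ∧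
        -((m : ℤ) - 2) ≤ z + 1 ∧ z + 1 ≤ -1) ∧
      (I ≠ ⊤ → I.IsMaximal) := by
  obtain ⟨n, rfl⟩ : ∃ n, m = n + 2 := ⟨m - 2, by omega⟩
  set s := ∑ i ∈ Finset.Icc 1 (n + 2), tβ i with hs
  have hsum : ∑ i ∈ Finset.Icc 2 (n + 2), tβ i = s - tβ 1 := by
    rw [hs, ← Finset.add_sum_Ioc_eq_sum_Icc (by omega : 1 ≤ n + 2), add_sub_cancel_left]
    rfl
  have hIspan : I = Ideal.span {wX, wY * wDy - algebraMap ℂ A2 (s + 1), wY ^ n} := by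
    obtain ⟨a, ha⟩ := exists_prod_mulForm_eq c (List.range' 2 (n + 1))
    choose b hb using fun i => exists_prod_mulForm_eq c ((List.range' 2 (n + 1)).filter (· ≠ i))
    have hQ' : Q = wY ^ n * (wY * wDy - algebraMap ℂ A2 (s - tβ 1)) +
        (a * wDy - ∑ i ∈ Finset.Icc 2 (n + 2), tβ i • b i) * wX := by
      have hterm : ∀ i ∈ Finset.Icc 2 (n + 2),
          tβ i • (((List.range' 2 (n + 1)).filter (· ≠ i)).map (mulForm c)).prod =
            tβ i • wY ^ n + (tβ i • b i) * wX := fun i hi => by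
        rw [hb, length_filter_range' hi, smul_add, smul_mul_assoc]
      rw [hQ, show n + 2 - 1 = n + 1 from rfl, ha, List.length_range', Finset.sum_congr rfl hterm,
        Finset.sum_add_distrib, ← Finset.sum_smul, ← Finset.sum_mul, hsum, Algebra.smul_def,
        Algebra.commutes]
      exact weylRelations_A2.pow_succ_mul_sub_eq n a _ _
    rw [hI, hP, hQ']
    exact weylRelations_A2.span_eq s (tβ 1)
      (by simpa using htβ 1 le_rfl (by omega) (-1)) n _
  have hproper : I ≠ ⊤ → ∃ k < n, s + 1 = -((k : ℂ) + 1) := by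
    intro hne
    by_contra! hall
    refine hne ((Ideal.eq_top_iff_one I).2 ?_)
    rw [hIspan, ← pow_zero wY]
    exact weylRelations_A2.pow_mem_of_pow_mem (Ideal.subset_span (by simp)) (Nat.zero_le n)
      (Ideal.subset_span (by simp)) fun j _ hj => hall j hj
  refine ⟨⟨fun hne => ?_, ?_⟩, fun hne => ?_⟩
  · obtain ⟨k, hk, hsk⟩ := hproper hne
    refine ⟨-(k + 2), ?_, by push_cast; omega, by omega⟩
    push_cast
    linear_combination hsk
  · rintro ⟨z, hz, hz1, hz2⟩
    obtain ⟨k, rfl⟩ : ∃ k : ℕ, z = -(k + 2) := ⟨(-z - 2).toNat, by omega⟩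
    have hsk : s + 1 = -((k : ℂ) + 1) := by
      rw [hz]
      push_cast
      ring
    rw [hIspan, hsk]
    exact span_euler_ne_top (by push_cast at hz1; omega)
  · obtain ⟨k, hk, hsk⟩ := hproper hne
    rw [hIspan, hsk] at hne ⊢
    exact weylRelations_A2.isMaximal_span adjoin_generators_eq_top hk hne
end
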